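/- Every irreducible reduced divisorial cone in Pⁿ over a rational variety (i.e. a cone whose general hyperplane section is a rational variety) is Cremona equivalent to a hyperplane. -/

import Mathlib

/-!
Concrete framework: projective space over a field `k` as `Projectivization`,
hypersurfaces as zero loci of homogeneous polynomials, rational maps given by
tuples of homogeneous polynomials, birational maps between (closed) subvarieties,
and Cremona equivalence of divisors.
-/

open MvPolynomial

/-- Projective `n`-space over `k`, as the projectivization of `k^{n+1}`. -/
abbrev ProjSp (k : Type) [Field k] (n : ℕ) : Type :=
  Projectivization k (Fin (n + 1) → k)

namespace ProjSp

variable (k : Type) [Field k]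

/-- The zero locus in `ℙⁿ` of a (homogeneous) polynomial. -/
def zeros {n : ℕ} (f : MvPolynomial (Fin (n + 1)) k) : Set (ProjSp k n) :=
  {x | eval x.rep f = 0}

/-- `D ⊆ ℙⁿ` is an irreducible and reduced divisor (hypersurface): it is the zero
locus of an irreducible homogeneous polynomial of positive degree. -/
def IsIrredDivisor {n : ℕ} (D : Set (ProjSp k n)) : Prop :=
  ∃ (d : ℕ) (f : MvPolynomial (Fin (n + 1)) k),
    0 < d ∧ f.IsHomogeneous d ∧ Irreducible f ∧ D = zeros k f

/-- A hyperplane in `ℙⁿ`: the zero locus of a nonzero linear form. -/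
def IsHyperplane {n : ℕ} (H : Set (ProjSp k n)) : Prop :=
  ∃ f : MvPolynomial (Fin (n + 1)) k, f ≠ 0 ∧ f.IsHomogeneous 1 ∧ H = zeros k f

/-- The line through two points of `ℙⁿ` (the set of points whose representing line
lies in the plane spanned by the two points). -/
def lineThrough {n : ℕ} (p q : ProjSp k n) : Set (ProjSp k n) :=
  {z | z.submodule ≤ p.submodule ⊔ q.submodule}

/-- `S` is a cone with vertex `p`: `p ∈ S` and `S` is a union of lines through `p`.
For an irreducible divisor of degree `d` this is equivalent to `p` being a point of
multiplicity `d` on `S`. -/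
def IsConeWithVertex {n : ℕ} (S : Set (ProjSp k n)) (p : ProjSp k n) : Prop :=
  p ∈ S ∧ ∀ x ∈ S, lineThrough k p x ⊆ S

/-- The cone with vertex `p` over a set `A ⊆ ℙⁿ`: the union of the lines joining `p`
to the points of `A`. -/
def coneOver {n : ℕ} (p : ProjSp k n) (A : Set (ProjSp k n)) : Set (ProjSp k n) :=
  ⋃ a ∈ A, lineThrough k p a

/-- The data of a rational map `ℙⁿ ⇢ ℙᵐ`: an `(m+1)`-tuple of homogeneous polynomials
of a common degree in `n+1` variables. -/
structure RatMap (n m : ℕ) where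
  deg : ℕ
  comp : Fin (m + 1) → MvPolynomial (Fin (n + 1)) k
  homog : ∀ i, (comp i).IsHomogeneous deg

variable {k}

/-- The rational map is defined at `x` if not all of its components vanish at `x`. -/
def RatMap.Defined {n m : ℕ} (F : RatMap k n m) (x : ProjSp k n) : Prop :=
  (fun i => eval x.rep (F.comp i)) ≠ 0

open scoped Classical in
/-- The value of a rational map at a point (junk value where undefined). -/
noncomputable def RatMap.app {n m : ℕ} (F : RatMap k n m) (x : ProjSp k n) :
    ProjSp k m :=
  if h : (fun i => eval x.rep (F.comp i)) ≠ 0 then Projectivization.mk k _ h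
  else Classical.arbitrary _

variable (k)

/-- `F` (with inverse `G`) restricts to a birational map from `A ⊆ ℙⁿ` onto `B ⊆ ℙᵐ`:
there are hypersurface complements, each meeting `A` resp. `B`, on which `F` and `G`
are defined, map `A` into `B` (resp. `B` into `A`) and are mutually inverse.  For
irreducible closed `A`, `B` this says exactly that `F` induces a birational map
`A ⇢ B`, i.e. that the strict transform (proper image) of `A` under `F` is `B`. -/
def IsBirationalOn {n m : ℕ} (F : RatMap k n m) (G : RatMap k m n)
    (A : Set (ProjSp k n)) (B : Set (ProjSp k m)) : Prop :=
  ∃ (u : MvPolynomial (Fin (n + 1)) k) (v : MvPolynomial (Fin (m + 1)) k)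
    (du dv : ℕ), u.IsHomogeneous du ∧ v.IsHomogeneous dv ∧
    ¬ A ⊆ zeros k u ∧ ¬ B ⊆ zeros k v ∧
    (∀ x ∈ A \ zeros k u,
      F.Defined x ∧ F.app x ∈ B ∧ G.Defined (F.app x) ∧ G.app (F.app x) = x) ∧
    (∀ y ∈ B \ zeros k v,
      G.Defined y ∧ G.app y ∈ A ∧ F.Defined (G.app y) ∧ F.app (G.app y) = y)

/-- `A ⊆ ℙⁿ` and `B ⊆ ℙᵐ` are birational (as abstract varieties). -/
def Birational {n m : ℕ} (A : Set (ProjSp k n)) (B : Set (ProjSp k m)) : Prop :=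
  ∃ (F : RatMap k n m) (G : RatMap k m n), IsBirationalOn k F G A B

/-- Two divisors `D, D' ⊆ ℙⁿ` are Cremona equivalent: there is a birational self-map
`Φ` of `ℙⁿ` (a Cremona transformation) whose strict transform of `D` is `D'`,
i.e. `Φ` restricts to a birational map from `D` onto `D'`. -/
def CremonaEquivalent {n : ℕ} (D D' : Set (ProjSp k n)) : Prop :=
  ∃ (F : RatMap k n n) (G : RatMap k n n),
    IsBirationalOn k F G Set.univ Set.univ ∧ IsBirationalOn k F G D D'

/-- `C` is a rational variety: it is birational to some projective space. -/
def IsRationalVariety {n : ℕ} (C : Set (ProjSp k n)) : Prop :=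
  ∃ m : ℕ, Birational k C (Set.univ : Set (ProjSp k m))

end ProjSp

open ProjSp


open MvPolynomial ProjSp

theorem hom_aeval_mul {k σ A : Type*} [Field k] [Fintype σ] [CommRing A] [Algebra k A] {d : ℕ}
    {f : MvPolynomial σ k} (hf : f.IsHomogeneous d) (a : A) (v : σ → A) :
    aeval (fun i => a * v i) f = a ^ d * aeval v f := by
  rw [aeval_def, aeval_def, eval₂_eq', eval₂_eq', Finset.mul_sum]
  refine Finset.sum_congr rfl fun s hs => ?_
  have h : ∑ i, s i = d := by
    have := hf (mem_support_iff.mp hs)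
    rw [← this, Finsupp.weight_apply, Finsupp.sum_fintype] <;> simp
  rw [← h, ← Finset.prod_pow_eq_pow_sum]
  simp only [mul_pow, Finset.prod_mul_distrib]
  ring

theorem hom_eval_smul {k σ : Type*} [Field k] [Fintype σ] {d : ℕ}
    {f : MvPolynomial σ k} (hf : f.IsHomogeneous d) (a : k) (v : σ → k) :
    eval (a • v) f = a ^ d * eval v f := by
  have := hom_aeval_mul hf a v
  exact this

/-- if a product of homogeneous `f ≠ 0` with `g` is homogeneous, `g` may be taken homogeneous. -/
theorem hom_of_mul {k σ : Type*} [Field k] {d e : ℕ}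
    {f g : MvPolynomial σ k} (hf : f.IsHomogeneous d) (hf0 : f ≠ 0) (hfg : (f * g).IsHomogeneous e)
    (h0 : f * g ≠ 0) : d ≤ e ∧ g.IsHomogeneous (e - d) := by
  have key : ∀ j, f * homogeneousComponent j g = homogeneousComponent (d + j) (f * g) := by
    intro j
    have h1 : f * g = ∑ i ∈ Finset.range (g.totalDegree + 1), f * homogeneousComponent i g := by
      rw [← Finset.mul_sum, sum_homogeneousComponent]
    rw [h1, map_sum]
    have h2 : ∀ i, homogeneousComponent (d + j) (f * homogeneousComponent i g)
        = if i = j then f * homogeneousComponent j g else 0 := by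
      intro i
      have := hf.mul (homogeneousComponent_isHomogeneous i g)
      rw [homogeneousComponent_of_mem (m := d+j) this]
      by_cases hij : i = j
      · simp [hij]
      · rw [if_neg (by omega), if_neg hij]
    simp only [h2, Finset.sum_ite_eq', Finset.mem_range]
    split_ifs with h
    · rfl
    · rw [homogeneousComponent_eq_zero _ _ (by omega), mul_zero]
  have key2 : ∀ j, d + j ≠ e → homogeneousComponent j g = 0 := by
    intro j hj
    have := key j
    rw [homogeneousComponent_of_mem hfg, if_neg hj] at this
    exact (mul_eq_zero.mp this).resolve_left hf0
  have hg : g ≠ 0 := right_ne_zero_of_mul h0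
  have hle : d ≤ e := by
    by_contra hlt
    apply hg
    rw [← sum_homogeneousComponent g]
    exact Finset.sum_eq_zero fun i _ => key2 i (by omega)
  refine ⟨hle, ?_⟩
  rw [← sum_homogeneousComponent g]
  refine IsHomogeneous.sum _ _ _ fun i _ => ?_
  by_cases h : i = e - d
  · rw [h]; exact homogeneousComponent_isHomogeneous _ _
  · rw [key2 i (by omega)]; exact isHomogeneous_zero _ _ _

section proj
variable {k : Type} [Field k]

theorem mk_mem_zeros {n d : ℕ} {f : MvPolynomial (Fin (n + 1)) k} (hf : f.IsHomogeneous d)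
    (v : Fin (n + 1) → k) (hv : v ≠ 0) :
    Projectivization.mk k v hv ∈ zeros k f ↔ eval v f = 0 := by
  obtain ⟨a, ha⟩ := Projectivization.exists_smul_eq_mk_rep k v hv
  simp only [zeros, Set.mem_ofPred_eq]
  rw [← ha, Units.smul_def, hom_eval_smul hf]
  simp

theorem app_mk {n m : ℕ} (F : RatMap k n m) (v : Fin (n + 1) → k) (hv : v ≠ 0)
    (h : (fun i => eval v (F.comp i)) ≠ 0) :
    F.Defined (Projectivization.mk k v hv) ∧
    F.app (Projectivization.mk k v hv) = Projectivization.mk k _ h := by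
  obtain ⟨a, ha⟩ := Projectivization.exists_smul_eq_mk_rep k v hv
  have e : (fun i => eval (Projectivization.mk k v hv).rep (F.comp i))
      = ((a : k) ^ F.deg) • (fun i => eval v (F.comp i)) := by
    funext i
    rw [← ha, Units.smul_def, hom_eval_smul (F.homog i)]
    simp
  have hd : (fun i => eval (Projectivization.mk k v hv).rep (F.comp i)) ≠ 0 := by
    rw [e]
    exact smul_ne_zero (by simp) h
  refine ⟨hd, ?_⟩
  rw [RatMap.app, dif_pos hd, Projectivization.mk_eq_mk_iff']
  exact ⟨_, e.symm⟩

theorem defined_mk {n m : ℕ} (F : RatMap k n m) (v : Fin (n + 1) → k) (hv : v ≠ 0)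
    (h : F.Defined (Projectivization.mk k v hv)) :
    (fun i => eval v (F.comp i)) ≠ 0 := by
  obtain ⟨a, ha⟩ := Projectivization.exists_smul_eq_mk_rep k v hv
  intro h0
  apply h
  funext i
  rw [← ha, Units.smul_def, hom_eval_smul (F.homog i), congrFun h0 i]
  simp

/-- Nullstellensatz for an irreducible homogeneous polynomial. -/
theorem dvd_of_vanish [IsAlgClosed k] {σ : Type} [Finite σ] {f h : MvPolynomial σ k}
    (hf : Irreducible f) (H : ∀ x : σ → k, eval x f = 0 → eval x h = 0) : f ∣ h := by
  have hp : (Ideal.span {f}).IsPrime :=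
    (Ideal.span_singleton_prime hf.ne_zero).mpr hf.prime
  rw [← Ideal.mem_span_singleton,
    ← IsPrime.vanishingIdeal_zeroLocus (K := k) (Ideal.span {f})]
  intro x hx
  have := hx f (Ideal.mem_span_singleton_self f)
  exact H x this

theorem hom_eval_zero {σ : Type} [Fintype σ] {e : ℕ} {h : MvPolynomial σ k}
    (hh : h.IsHomogeneous e) (he : e ≠ 0) : eval 0 h = 0 := by
  have := hom_eval_smul hh 0 0
  simpa [he] using this

theorem hom_zero_eq_C {σ : Type} {h : MvPolynomial σ k}
    (hh : h.IsHomogeneous 0) : h = C (coeff 0 h) := by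
  have := (totalDegree_eq_zero_iff_eq_C (p := h)).mp (Nat.le_zero.mp hh.totalDegree_le)
  exact this

theorem dvd_of_zeros_subset [IsAlgClosed k] {n e d : ℕ} {f h : MvPolynomial (Fin (n + 1)) k}
    (hf : Irreducible f) (hfd : f.IsHomogeneous d) (hh : h.IsHomogeneous e)
    (hne : (zeros k f).Nonempty)
    (hs : zeros k f ⊆ zeros k h) : f ∣ h := by
  apply dvd_of_vanish hf
  intro x hx
  by_cases h0 : x = 0
  · by_cases he : e = 0
    · subst he
      obtain ⟨y, hy⟩ := hne
      have := hs hy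
      rw [hom_zero_eq_C hh] at this ⊢
      simpa [zeros] using this
    · rw [h0]; exact hom_eval_zero hh he
  · exact (mk_mem_zeros hh x h0).mp (hs ((mk_mem_zeros hfd x h0).mpr hx))
end proj

open MvPolynomial ProjSp

section crit
variable {k : Type} [Field k]

theorem eval_comp {σ τ : Type} (x : τ → k) (F : σ → MvPolynomial τ k) (w : MvPolynomial σ k) :
    eval x (aeval F w) = eval (fun i => eval x (F i)) w := by
  induction w using MvPolynomial.induction_on with
  | C a => simp
  | add p q hp hq => simp only [map_add, hp, hq]
  | mul_X p i hp => simp only [map_mul, hp, aeval_X, eval_X]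

theorem aeval_comp {σ τ A : Type} [CommRing A] [Algebra k A] (x : τ → A) (F : σ → MvPolynomial τ k)
    (w : MvPolynomial σ k) :
    aeval x (aeval F w) = aeval (fun i => aeval x (F i)) w := by
  induction w using MvPolynomial.induction_on with
  | C a => simp
  | add p q hp hq => simp only [map_add, hp, hq]
  | mul_X p i hp => simp only [map_mul, hp, aeval_X, eval_X]

theorem irreducible_X' {σ : Type} (j : σ) : Irreducible (X j : MvPolynomial σ k) :=
  X_prime.irreducible

theorem crit [IsAlgClosed k] {n d dF dG da db : ℕ} {f : MvPolynomial (Fin (n + 1)) k}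
    (hf : Irreducible f) (hfd : f.IsHomogeneous d) (hS : (zeros k f).Nonempty)
    (F G : Fin (n + 1) → MvPolynomial (Fin (n + 1)) k)
    (hF : ∀ i, (F i).IsHomogeneous dF) (hG : ∀ i, (G i).IsHomogeneous dG)
    (α β : MvPolynomial (Fin (n + 1)) k) (hα : α.IsHomogeneous da) (hβ : β.IsHomogeneous db)
    (hGF : ∀ i, α * aeval F (G i) = β * X i) (hfα : ¬ f ∣ α) (hfβ : ¬ f ∣ β)
    (j : Fin (n + 1)) (hj : j ≠ 0) (hF0 : ¬ f ∣ F 0) (hFj : f ∣ F j) (hFj0 : F j ≠ 0)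
    (hc : ∀ (e : ℕ) (w : MvPolynomial (Fin (n + 1)) k), w.IsHomogeneous e → f ∣ aeval F w → X j ∣ w) :
    CremonaEquivalent k (zeros k f) (zeros k (X j)) := by
  have hprime := hf.prime
  have hα0 : α ≠ 0 := fun h => hfα (h ▸ dvd_zero f)
  -- algebraic independence of `F` on homogeneous polynomials
  have hindep : ∀ (e : ℕ) (w : MvPolynomial (Fin (n + 1)) k), w.IsHomogeneous e → aeval F w = 0 → w = 0 := by
    intro e
    induction e with
    | zero =>
      intro w hw h
      rw [hom_zero_eq_C hw] at h ⊢
      simpa using h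
    | succ e ih =>
      intro w hw h
      obtain ⟨w', rfl⟩ := hc _ w hw (h ▸ dvd_zero f)
      by_contra h0
      have h1 := hom_of_mul (isHomogeneous_X k j) (X_ne_zero j) hw h0
      simp only [map_mul, aeval_X, mul_eq_zero, hFj0, false_or] at h
      rw [ih w' h1.2 h] at h0
      simp at h0
  have hcomp : ∀ (e : ℕ) (w : MvPolynomial (Fin (n + 1)) k), w.IsHomogeneous e → α ^ e * aeval F (aeval G w) = β ^ e * w := by
    intro e w hw
    rw [aeval_comp, ← hom_aeval_mul hw]
    simp only [hGF]
    rw [hom_aeval_mul hw, aeval_X_left_apply]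
  have hFG : ∀ i a, X a * aeval G (F i) = X i * aeval G (F a) := by
    intro i a
    have hh : ∀ i a, (X a * aeval G (F i)).IsHomogeneous (1 + dG * dF) := fun i a =>
      (isHomogeneous_X k a).mul ((hF i).aeval _ hG)
    refine sub_eq_zero.mp (hindep _ _ ((hh i a).sub (hh a i)) ?_)
    refine (mul_eq_zero.mp (?_ : α ^ dF * _ = 0)).resolve_left (pow_ne_zero _ hα0)
    simp only [map_sub, map_mul, aeval_X]
    linear_combination F a * hcomp _ _ (hF i) - F i * hcomp _ _ (hF a)
  have hdF : dF ≠ 0 := by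
    rintro rfl
    rw [hom_zero_eq_C (hF j)] at hFj hFj0
    refine hf.not_isUnit (isUnit_of_dvd_unit hFj ?_)
    exact (isUnit_iff_ne_zero.mpr (fun h => hFj0 (by rw [h, C_0]))).map C
  set v := aeval G (F 0) with hv
  have hvh : v.IsHomogeneous (dG * dF) := (hF 0).aeval _ hG
  have hXv : ¬ X j ∣ v := by
    rintro ⟨r, hr⟩
    have h1 := hcomp _ _ (hF 0)
    rw [← hv, hr] at h1
    simp only [map_mul, aeval_X] at h1
    have h2 : f ∣ β ^ dF * F 0 := h1 ▸ (hFj.mul_right _).mul_left _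
    rcases hprime.dvd_or_dvd h2 with h | h
    · exact hfβ (hprime.dvd_of_dvd_pow h)
    · exact hF0 h
  have hXf : X j ∣ aeval G f := by
    refine hc (dG * d) _ (hfd.aeval _ hG) ?_
    have h1 := hcomp _ _ hfd
    have h2 : f ∣ α ^ d * aeval F (aeval G f) := h1 ▸ dvd_mul_left _ _
    rcases hprime.dvd_or_dvd h2 with h | h
    · exact absurd (hprime.dvd_of_dvd_pow h) hfα
    · exact h
  have huh : (β * F 0).IsHomogeneous (db + dF) := hβ.mul (hF 0)
  have hu : ¬ zeros k f ⊆ zeros k (β * F 0) := by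
    intro h
    rcases hprime.dvd_or_dvd (dvd_of_zeros_subset hf hfd huh hS h) with h | h
    · exact hfβ h
    · exact hF0 h
  have hHne : (zeros k (X j : MvPolynomial (Fin (n + 1)) k)).Nonempty := by
    have h0 : (Pi.single 0 1 : Fin (n + 1) → k) ≠ 0 := by simp
    refine ⟨Projectivization.mk k (Pi.single 0 1) h0, ?_⟩
    rw [mk_mem_zeros (isHomogeneous_X k j)]
    simp [hj]
  have hv' : ¬ zeros k (X j) ⊆ zeros k v := fun h =>
    hXv (dvd_of_zeros_subset (irreducible_X' j) (isHomogeneous_X k j) hvh hHne h)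
  let FF : RatMap k n n := ⟨dF, F, hF⟩
  let GG : RatMap k n n := ⟨dG, G, hG⟩
  have main1 : ∀ x ∉ zeros k (β * F 0), FF.Defined x ∧ GG.Defined (FF.app x) ∧
      GG.app (FF.app x) = x ∧ (x ∈ zeros k f → FF.app x ∈ zeros k (X j)) := by
    intro x
    induction x using Projectivization.ind with
    | h x hx =>
    intro hux
    rw [mk_mem_zeros huh, map_mul, mul_eq_zero, not_or] at hux
    have hFx : (fun i => eval x (FF.comp i)) ≠ 0 := fun h => hux.2 (congrFun h 0)
    obtain ⟨h1, h2⟩ := app_mk FF x hx hFx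
    have hG' : ∀ i, eval x α * eval (fun i => eval x (FF.comp i)) (GG.comp i)
        = eval x β * x i := by
      intro i
      have := congrArg (eval x) (hGF i)
      rw [map_mul, map_mul, eval_comp, eval_X] at this
      exact this
    have hGx : (fun i => eval (fun i => eval x (FF.comp i)) (GG.comp i)) ≠ 0 := by
      intro h
      apply hx
      funext i
      have h3 := hG' i
      rw [congrFun h i] at h3
      simpa [hux.1] using h3.symm
    obtain ⟨h3, h4⟩ := app_mk GG _ hFx hGx
    rw [h2]
    refine ⟨h1, h3, ?_, ?_⟩
    · rw [h4, Projectivization.mk_eq_mk_iff']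
      have hαx : eval x α ≠ 0 := by
        intro h
        apply hx
        funext i
        have h3 := hG' i
        rw [h] at h3
        simpa [hux.1] using h3.symm
      refine ⟨eval x β / eval x α, ?_⟩
      funext i
      have := hG' i
      simp only [Pi.smul_apply, smul_eq_mul]
      field_simp
      rw [← this]
    · intro hx'
      rw [mk_mem_zeros hfd] at hx'
      rw [mk_mem_zeros (isHomogeneous_X k j), eval_X]
      obtain ⟨r, hr⟩ := hFj
      change eval x (F j) = 0
      rw [hr, map_mul, hx', zero_mul]
  have main2 : ∀ x ∉ zeros k v, GG.Defined x ∧ FF.Defined (GG.app x) ∧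
      FF.app (GG.app x) = x ∧ (x ∈ zeros k (X j) → GG.app x ∈ zeros k f) := by
    intro x
    induction x using Projectivization.ind with
    | h x hx =>
    intro hux
    rw [mk_mem_zeros hvh, hv, eval_comp] at hux
    have hGx : (fun i => eval x (GG.comp i)) ≠ 0 := by
      intro h
      apply hux
      change eval (fun i => eval x (GG.comp i)) (F 0) = 0
      rw [h]
      exact hom_eval_zero (hF 0) hdF
    obtain ⟨h1, h2⟩ := app_mk GG x hx hGx
    have hFx : (fun i => eval (fun i => eval x (GG.comp i)) (FF.comp i)) ≠ 0 :=
      fun h => hux (congrFun h 0)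
    obtain ⟨h3, h4⟩ := app_mk FF _ hGx hFx
    rw [h2]
    refine ⟨h1, h3, ?_, ?_⟩
    · rw [h4, Projectivization.mk_eq_mk_iff']
      have hF' : ∀ i a, x a * eval (fun i => eval x (G i)) (F i)
        = x i * eval (fun i => eval x (G i)) (F a) := by
        intro i a
        have := congrArg (eval x) (hFG i a)
        rwa [map_mul, map_mul, eval_comp, eval_comp, eval_X, eval_X] at this
      have hx0 : x 0 ≠ 0 := by
        intro h0
        apply hx
        funext i
        have := hF' i 0
        rw [h0] at this
        simpa [hux] using this.symm
      refine ⟨eval (fun i => eval x (G i)) (F 0) / x 0, ?_⟩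
      funext i
      have := hF' i 0
      simp only [Pi.smul_apply, smul_eq_mul]
      field_simp
      rw [mul_comm, ← this]
    · intro hx'
      rw [mk_mem_zeros (isHomogeneous_X k j), eval_X] at hx'
      rw [mk_mem_zeros hfd]
      obtain ⟨r, hr⟩ := hXf
      have := congrArg (eval x) hr
      rwa [eval_comp, map_mul, eval_X, hx', zero_mul] at this
  refine ⟨FF, GG, ⟨β * F 0, v, _, _, huh, hvh, ?_, ?_, ?_, ?_⟩,
    ⟨β * F 0, v, _, _, huh, hvh, hu, hv', ?_, ?_⟩⟩
  · exact fun h => hu ((Set.subset_univ _).trans h)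
  · exact fun h => hv' ((Set.subset_univ _).trans h)
  · intro x hx
    obtain ⟨a, b, c, _⟩ := main1 x hx.2
    exact ⟨a, Set.mem_univ _, b, c⟩
  · intro x hx
    obtain ⟨a, b, c, _⟩ := main2 x hx.2
    exact ⟨a, Set.mem_univ _, b, c⟩
  · intro x hx
    obtain ⟨a, b, c, e⟩ := main1 x hx.2
    exact ⟨a, e hx.1, b, c⟩
  · intro x hx
    obtain ⟨a, b, c, e⟩ := main2 x hx.2
    exact ⟨a, e hx.1, b, c⟩
end crit

open MvPolynomial ProjSp

section ft
open IntermediateField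

theorem alg_of_adjoin_top {k K : Type} [Field k] [Field K] [Algebra k K] (s : Set K)
    (h : IntermediateField.adjoin k s = ⊤) :
    Algebra.IsAlgebraic (Algebra.adjoin k s) K := by
  constructor
  intro x
  have hx : x ∈ IntermediateField.adjoin k s := h ▸ IntermediateField.mem_top
  induction hx using IntermediateField.adjoin_induction with
  | mem x hx =>
    exact isAlgebraic_algebraMap (⟨x, Algebra.subset_adjoin hx⟩ : Algebra.adjoin k s)
  | algebraMap x =>
    exact isAlgebraic_algebraMap (algebraMap k (Algebra.adjoin k s) x)
  | add x y _ _ h1 h2 => exact h1.add h2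
  | inv x _ h1 => exact h1.inv
  | mul x y _ _ h1 h2 => exact h1.mul h2

theorem prim_lin {k F K : Type} [Field k] [CharZero k] [Field F] [Field K] [Algebra k F]
    [Algebra F K] [Algebra k K] [IsScalarTower k F K] [CharZero F]
    [Algebra.IsAlgebraic F K] (x y : K) (h : F⟮x, y⟯ = ⊤) : ∃ c : k, F⟮x + c • y⟯ = ⊤ := by
  have hfin : FiniteDimensional F K := by
    have := finiteDimensional_adjoin_pair (K := F) (Algebra.IsIntegral.isIntegral x)
      (Algebra.IsIntegral.isIntegral y)
    rw [h] at this
    exact Module.Finite.equiv (IntermediateField.topEquiv (F := F) (E := K)).toLinearEquiv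
  have : Finite (IntermediateField F K) :=
    (Field.exists_primitive_element_iff_finite_intermediateField F K).mp
      ⟨inferInstance, Field.exists_primitive_element F K⟩
  have : Infinite k := inferInstance
  obtain ⟨c, c', hne, hcc⟩ := Finite.exists_ne_map_eq_of_infinite (fun c : k => F⟮x + c • y⟯)
  refine ⟨c, ?_⟩
  have h1 : x + c • y ∈ F⟮x + c • y⟯ := mem_adjoin_simple_self F _
  have h2 : x + c' • y ∈ F⟮x + c • y⟯ := by rw [hcc]; exact mem_adjoin_simple_self F _
  have hk : ∀ (a : k) (z : K), z ∈ F⟮x + c • y⟯ → a • z ∈ F⟮x + c • y⟯ := by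
    intro a z hz
    rw [← algebraMap_smul F a z]
    exact IntermediateField.smul_mem _ hz
  have hy : y ∈ F⟮x + c • y⟯ := by
    have h3 := hk (c - c')⁻¹ _ (sub_mem h1 h2)
    have h4 : (c - c')⁻¹ • (x + c • y - (x + c' • y)) = y := by
      rw [add_sub_add_left_eq_sub, ← sub_smul, smul_smul, inv_mul_cancel₀ (sub_ne_zero.mpr hne),
        one_smul]
    rwa [h4] at h3
  have hx : x ∈ F⟮x + c • y⟯ := by
    have h3 := sub_mem h1 (hk c y hy)
    rwa [add_sub_cancel_right] at h3
  rw [eq_top_iff, ← h, adjoin_le_iff]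
  rintro z (rfl | rfl)
  · exact hx
  · exact hy

theorem ft_top {k K : Type} [Field k] [CharZero k] [Field K] [Algebra k K] {ι : Type}
    [Fintype ι] [DecidableEq ι] {m : ℕ} (hι : Fintype.card ι = m + 2) (a : ι → K)
    (ha : adjoin k (Set.range a) = ⊤) (φ : Fin m → K) (hφ : AlgebraicIndependent k φ)
    (hφt : adjoin k (Set.range φ) = ⊤) (J : Set (Fin m)) (e : Fin m → ι)
    (hae : ∀ j ∈ J, a (e j) = φ j) :
    ∃ i0 i1, i0 ≠ i1 ∧ i0 ∉ e '' J ∧ i1 ∉ e '' J ∧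
      ∃ c : k, adjoin k (insert (a i0 + c • a i1) (a '' {i0, i1}ᶜ)) = ⊤ := by
  classical
  have hb : IsTranscendenceBasis k φ := by
    refine hφ.isTranscendenceBasis_iff_isAlgebraic.mpr ?_
    exact alg_of_adjoin_top _ hφt
  have hst : φ '' J ⊆ Set.range a := by
    rintro _ ⟨j, hj, rfl⟩
    exact ⟨e j, hae j hj⟩
  have := alg_of_adjoin_top _ ha
  have hs : AlgebraicIndepOn k id (φ '' J) := by
    have h1 := hφ.to_subtype_range
    exact AlgebraicIndependent.mono (Set.image_subset_range φ J) h1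
  obtain ⟨u, hsu, hut, hu⟩ := exists_isTranscendenceBasis_between (R := k) (φ '' J) (Set.range a)
    hst hs
  have hcard : Cardinal.mk u = Cardinal.mk (Fin m) := hu.cardinalMk_eq hb
  have hfin : Finite u := by
    rw [← Cardinal.lt_aleph0_iff_finite, hcard]; simp
  have hg : ∀ z : u, ∃ i, a i = z ∧ ∀ j ∈ J, φ j = z → i = e j := by
    intro z
    by_cases hz : (z : K) ∈ φ '' J
    · obtain ⟨j, hj, hjz⟩ := hz
      refine ⟨e j, by rw [hae j hj, hjz], fun j' _ hj'z => ?_⟩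
      rw [hφ.injective (hj'z.trans hjz.symm)]
    · obtain ⟨i, hi⟩ := hut z.2
      exact ⟨i, hi, fun j hj h => absurd ⟨j, hj, h⟩ hz⟩
  choose g hga hgJ using hg
  have hginj : Function.Injective g := by
    intro z z' h
    apply Subtype.ext
    rw [← hga, ← hga, h]
  have hUc : (Set.range g).ncard = m := by
    rw [← Set.image_univ, Set.ncard_image_of_injective _ hginj, Set.ncard_univ, Nat.card, hcard]
    simp
  have hUc2 : (Set.range g)ᶜ.ncard = 2 := by
    have := Set.ncard_add_ncard_compl (Set.range g)
    rw [hUc, Nat.card_eq_fintype_card, hι] at this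
    omega
  obtain ⟨i0, i1, hne, hU⟩ := Set.ncard_eq_two.mp hUc2
  have hU' : ({i0, i1} : Set ι)ᶜ = Set.range g := by rw [← hU, compl_compl]
  have hJU : e '' J ⊆ Set.range g := by
    rintro _ ⟨j, hj, rfl⟩
    exact ⟨⟨φ j, hsu ⟨j, hj, rfl⟩⟩, hgJ _ j hj rfl⟩
  have hn : ∀ i ∈ ({i0, i1} : Set ι), i ∉ e '' J := by
    intro i hi h
    rw [← hU] at hi
    exact hi (hJU h)
  have hau : a '' {i0, i1}ᶜ = u := by
    rw [hU', ← Set.range_comp]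
    have : a ∘ g = Subtype.val := funext hga
    rw [this, Subtype.range_coe]
  have halg : Algebra.IsAlgebraic (adjoin k u) K := by
    have := hu.isAlgebraic_field
    rwa [Subtype.range_coe] at this
  have hpair : (adjoin k u)⟮a i0, a i1⟯ = ⊤ := by
    apply restrictScalars_injective k
    rw [adjoin_adjoin_left, restrictScalars_top, eq_top_iff, ← ha, adjoin_le_iff]
    rintro _ ⟨i, rfl⟩
    apply subset_adjoin
    by_cases hi : i ∈ ({i0, i1} : Set ι)
    · right
      rcases hi with rfl | rfl
      · simp
      · simp
    · left
      rw [← hau]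
      exact ⟨i, hi, rfl⟩
  have : CharZero (adjoin k u) := charZero_of_injective_algebraMap (algebraMap k _).injective
  obtain ⟨c, hc⟩ := prim_lin (k := k) _ _ hpair
  refine ⟨i0, i1, hne, hn _ (by simp), hn _ (by simp), c, ?_⟩
  have h3 := congrArg (restrictScalars k) hc
  rw [adjoin_adjoin_left, restrictScalars_top, Set.union_singleton] at h3
  rw [hau, h3]

theorem ft {k K : Type} [Field k] [CharZero k] [Field K] [Algebra k K] {ι : Type}
    [Fintype ι] [DecidableEq ι] {m : ℕ} (hι : Fintype.card ι = m + 2) (a : ι → K)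
    (φ : Fin m → K) (hφ : AlgebraicIndependent k φ)
    (hφt : adjoin k (Set.range φ) = adjoin k (Set.range a)) (J : Set (Fin m)) (e : Fin m → ι)
    (hae : ∀ j ∈ J, a (e j) = φ j) :
    ∃ i0 i1, i0 ≠ i1 ∧ i0 ∉ e '' J ∧ i1 ∉ e '' J ∧
      ∃ c : k, adjoin k (insert (a i0 + c • a i1) (a '' {i0, i1}ᶜ)) = adjoin k (Set.range a) := by
  set M := adjoin k (Set.range a) with hM
  have haM : ∀ i, a i ∈ M := fun i => subset_adjoin _ _ ⟨i, rfl⟩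
  have hφM : ∀ i, φ i ∈ M := fun i => by rw [← hφt]; exact subset_adjoin _ _ ⟨i, rfl⟩
  let a' : ι → M := fun i => ⟨a i, haM i⟩
  let φ' : Fin m → M := fun i => ⟨φ i, hφM i⟩
  have htop : ∀ s : Set M, adjoin k (M.val '' s) = M ↔ adjoin k s = ⊤ := by
    intro s
    rw [← adjoin_map]
    have h1 : (⊤ : IntermediateField k M).map M.val = M := by
      rw [← AlgHom.fieldRange_eq_map, fieldRange_val]
    constructor
    · intro h
      apply map_injective M.val
      rw [h, h1]
    · intro h
      rw [h, h1]
  have ha' : adjoin k (Set.range a') = ⊤ := by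
    rw [← htop, ← Set.range_comp]
    rfl
  have hφ't : adjoin k (Set.range φ') = ⊤ := by
    rw [← htop, ← Set.range_comp]
    exact hφt
  have hφ' : AlgebraicIndependent k φ' :=
    AlgebraicIndependent.of_comp M.val hφ
  obtain ⟨i0, i1, h1, h2, h3, c, hc⟩ := ft_top hι a' ha' φ' hφ' hφ't J e
    (fun j hj => Subtype.ext (hae j hj))
  refine ⟨i0, i1, h1, h2, h3, c, ?_⟩
  rw [← htop, Set.image_insert_eq, ← Set.image_comp] at hc
  exact hc
end ft

open MvPolynomial ProjSp

section locsec
variable {k L κ : Type} [Field k] [Field L] [Field κ] [Algebra k L] [Algebra k κ]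

def LocClosed (W : Subalgebra k (L × κ)) : Prop := ∀ z ∈ W, z.2 ≠ 0 → z⁻¹ ∈ W

variable (k) in
def locA (s : Set (L × κ)) : Subalgebra k (L × κ) := sInf {W | LocClosed W ∧ s ⊆ W}

theorem locA_closed (s : Set (L × κ)) : LocClosed (locA k s) := by
  intro z hz h0
  rw [locA, Algebra.mem_sInf] at hz ⊢
  intro W hW
  exact hW.1 z (hz W hW) h0

theorem subset_locA (s : Set (L × κ)) : s ⊆ locA k s := by
  intro z hz
  rw [SetLike.mem_coe, locA, Algebra.mem_sInf]
  intro W hW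
  exact hW.2 hz

theorem locA_le {s : Set (L × κ)} {W : Subalgebra k (L × κ)} (hW : LocClosed W) (h : s ⊆ W) :
    locA k s ≤ W := sInf_le ⟨hW, h⟩

theorem locA_mono {s t : Set (L × κ)} (h : s ⊆ t) : locA k s ≤ locA k t :=
  locA_le (locA_closed t) (h.trans (subset_locA t))

theorem locA_lift {s : Set (L × κ)} {c : κ}
    (hc : c ∈ IntermediateField.adjoin k (Prod.snd '' s)) : ∃ z, (z, c) ∈ locA k s := by
  induction hc using IntermediateField.adjoin_induction with
  | mem x hx =>
    obtain ⟨⟨z, c⟩, h, rfl⟩ := hx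
    exact ⟨z, subset_locA s h⟩
  | algebraMap x => exact ⟨algebraMap k L x, (locA k s).algebraMap_mem x⟩
  | add x y _ _ h1 h2 =>
    obtain ⟨a, ha⟩ := h1
    obtain ⟨b, hb⟩ := h2
    exact ⟨a + b, add_mem ha hb⟩
  | inv x _ h1 =>
    obtain ⟨a, ha⟩ := h1
    by_cases h : x = 0
    · subst h
      exact ⟨0, by rw [inv_zero]; exact zero_mem _⟩
    · exact ⟨a⁻¹, locA_closed s _ ha h⟩
  | mul x y _ _ h1 h2 =>
    obtain ⟨a, ha⟩ := h1
    obtain ⟨b, hb⟩ := h2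
    exact ⟨a * b, mul_mem ha hb⟩

theorem locA_snd {s : Set (L × κ)} {z : L × κ} (hz : z ∈ locA k s) :
    z.2 ∈ IntermediateField.adjoin k (Prod.snd '' s) := by
  have : locA k s ≤
      (IntermediateField.adjoin k (Prod.snd '' s)).toSubalgebra.comap (AlgHom.snd k L κ) := by
    apply locA_le
    · intro z hz _
      exact (IntermediateField.adjoin k (Prod.snd '' s)).inv_mem hz
    · intro z hz
      exact IntermediateField.subset_adjoin _ _ ⟨z, hz, rfl⟩
  exact this hz

theorem adjoin_eq_of_locA {s t : Set (L × κ)} (h : locA k s = locA k t) :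
    IntermediateField.adjoin k (Prod.snd '' s) = IntermediateField.adjoin k (Prod.snd '' t) := by
  ext c
  constructor
  · intro hc
    obtain ⟨z, hz⟩ := locA_lift hc
    rw [h] at hz
    exact locA_snd hz
  · intro hc
    obtain ⟨z, hz⟩ := locA_lift hc
    rw [← h] at hz
    exact locA_snd hz

variable {ι : Type} [DecidableEq ι]

theorem locA_update_le (v : ι → L × κ) (i : ι) (x : L × κ) (hx : x ∈ locA k (v '' {i}ᶜ)) :
    locA k (Set.range (Function.update v i (v i + x))) ≤ locA k (Set.range v) := by
  apply locA_le (locA_closed _)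
  rintro _ ⟨j, rfl⟩
  by_cases h : j = i
  · subst h
    rw [Function.update_self]
    exact add_mem (subset_locA _ ⟨j, rfl⟩) (locA_mono (Set.image_subset_range _ _) hx)
  · rw [Function.update_of_ne h]
    exact subset_locA _ ⟨j, rfl⟩

theorem locA_update (v : ι → L × κ) (i : ι) (x : L × κ) (hx : x ∈ locA k (v '' {i}ᶜ)) :
    locA k (Set.range (Function.update v i (v i + x))) = locA k (Set.range v) := by
  apply le_antisymm (locA_update_le v i x hx)
  have h1 : Function.update v i (v i + x) '' {i}ᶜ = v '' {i}ᶜ := by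
    apply Set.image_congr
    intro j hj
    exact Function.update_of_ne hj _ _
  have := locA_update_le (k := k) (Function.update v i (v i + x)) i (-x)
    (by rw [h1]; exact neg_mem hx)
  simpa using this

theorem chain [Fintype ι] [CharZero k] {m : ℕ} (hι : Fintype.card ι = m + 2) (φ : Fin m → κ)
    (hφ : AlgebraicIndependent k φ) (v : ι → L × κ)
    (hv : IntermediateField.adjoin k (Set.range φ) =
      IntermediateField.adjoin k (Prod.snd '' Set.range v)) (r : ℕ) (hr : r ≤ m) :
    ∃ v' : ι → L × κ, locA k (Set.range v') = locA k (Set.range v) ∧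
      ∃ e : Fin m → ι, ∀ j, j.val < r → (v' (e j)).2 = φ j := by
  induction r with
  | zero =>
    have : Nonempty ι := by
      rw [← Fintype.card_pos_iff]; omega
    exact ⟨v, rfl, fun _ => Classical.arbitrary _, fun j hj => absurd hj (by omega)⟩
  | succ r ih =>
    obtain ⟨v', hv', e, he⟩ := ih (by omega)
    have hadj := hv.trans (adjoin_eq_of_locA hv').symm
    rw [← Set.range_comp] at hadj
    obtain ⟨i0, i1, hne, h0, h1, c, hc⟩ := ft hι (Prod.snd ∘ v') φ hφ hadj {j | j.val < r} e he
    set v1 := Function.update v' i0 (v' i0 + c • v' i1) with hv1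
    have e1 : locA k (Set.range v1) = locA k (Set.range v') := by
      apply locA_update
      exact Subalgebra.smul_mem _ (subset_locA (k := k) (v' '' {i0}ᶜ) ⟨i1, hne.symm, rfl⟩) c
    have him : Prod.snd '' (v1 '' {i1}ᶜ) =
        insert ((Prod.snd ∘ v') i0 + c • (Prod.snd ∘ v') i1) ((Prod.snd ∘ v') '' {i0, i1}ᶜ) := by
      ext y
      constructor
      · rintro ⟨_, ⟨i, hi, rfl⟩, rfl⟩
        by_cases h : i = i0
        · subst h
          left
          simp [hv1]
        · right
          refine ⟨i, ?_, ?_⟩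
          · simp only [Set.mem_compl_iff, Set.mem_insert_iff, Set.mem_singleton_iff] at hi ⊢
            tauto
          · simp [hv1, h]
      · rintro (rfl | ⟨i, hi, rfl⟩)
        · exact ⟨_, ⟨i0, hne, rfl⟩, by simp [hv1]⟩
        · simp only [Set.mem_compl_iff, Set.mem_insert_iff, Set.mem_singleton_iff] at hi
          exact ⟨_, ⟨i, by simp only [Set.mem_compl_iff, Set.mem_singleton_iff]; tauto, rfl⟩,
            by simp [hv1, show i ≠ i0 by tauto]⟩
    let r' : Fin m := ⟨r, by omega⟩
    have hmem : φ r' - (v' i1).2 ∈ IntermediateField.adjoin k (Prod.snd '' (v1 '' {i1}ᶜ)) := by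
      rw [him, hc]
      apply sub_mem
      · rw [← hadj]
        exact IntermediateField.subset_adjoin _ _ ⟨r', rfl⟩
      · exact IntermediateField.subset_adjoin _ _ ⟨i1, rfl⟩
    obtain ⟨z, hz⟩ := locA_lift hmem
    refine ⟨Function.update v1 i1 (v1 i1 + (z, φ r' - (v' i1).2)), ?_,
      Function.update e r' i1, ?_⟩
    · rw [locA_update _ _ _ hz, e1, hv']
    · intro j hj
      by_cases hjr : j = r'
      · subst hjr
        simp [hv1, hne.symm]
      · have hjr' : j.val < r := by
          have : j.val ≠ r := fun h => hjr (Fin.ext h)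
          omega
        have a0 : e j ≠ i0 := fun h => h0 ⟨j, hjr', h⟩
        have a1 : e j ≠ i1 := fun h => h1 ⟨j, hjr', h⟩
        simp [hv1, hjr, a0, a1, he j hjr']

theorem chain_end [Fintype ι] [CharZero k] {m : ℕ} (hι : Fintype.card ι = m + 2) (φ : Fin m → κ)
    (hφ : AlgebraicIndependent k φ) (v : ι → L × κ)
    (hv : IntermediateField.adjoin k (Set.range φ) =
      IntermediateField.adjoin k (Prod.snd '' Set.range v)) :
    ∃ v' : ι → L × κ, locA k (Set.range v') = locA k (Set.range v) ∧
      ∃ (e : Fin m → ι) (i0 i1 : ι), i0 ≠ i1 ∧ Function.Injective e ∧ Set.range e = {i0, i1}ᶜ ∧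
      (∀ j, (v' (e j)).2 = φ j) ∧ (v' i0).2 = 0 ∧ (v' i1).2 = 0 := by
  obtain ⟨v', hv', e, he⟩ := chain hι φ hφ v hv m le_rfl
  have he' : ∀ j, (v' (e j)).2 = φ j := fun j => he j j.2
  have hinj : Function.Injective e := by
    intro i j hij
    apply hφ.injective
    rw [← he', ← he', hij]
  have hUc2 : (Set.range e)ᶜ.ncard = 2 := by
    have := Set.ncard_add_ncard_compl (Set.range e)
    rw [Nat.card_eq_fintype_card, hι, ← Set.image_univ, Set.ncard_image_of_injective _ hinj,
      Set.ncard_univ, Nat.card_eq_fintype_card, Fintype.card_fin, Set.image_univ] at this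
    omega
  obtain ⟨i0, i1, hne, hU⟩ := Set.ncard_eq_two.mp hUc2
  have hU' : Set.range e = {i0, i1}ᶜ := by rw [← hU, compl_compl]
  have hei : ∀ j, e j ≠ i0 ∧ e j ≠ i1 := by
    intro j
    have : e j ∈ ({i0, i1} : Set ι)ᶜ := hU' ▸ ⟨j, rfl⟩
    simpa using this
  have key : ∀ (v'' : ι → L × κ) (i : ι), (∀ j, e j ≠ i) → (∀ j, (v'' (e j)).2 = φ j) →
      locA k (Set.range v'') = locA k (Set.range v) →
      ∃ z, (z, -(v'' i).2) ∈ locA k (v'' '' {i}ᶜ) := by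
    intro v'' i hi h2 h3
    apply locA_lift
    apply neg_mem
    have h4 := hv.trans (adjoin_eq_of_locA h3).symm
    have h5 : (v'' i).2 ∈ IntermediateField.adjoin k (Set.range φ) := by
      rw [h4]
      exact IntermediateField.subset_adjoin _ _ ⟨_, ⟨i, rfl⟩, rfl⟩
    refine IntermediateField.adjoin.mono _ _ _ ?_ h5
    rintro _ ⟨j, rfl⟩
    exact ⟨_, ⟨e j, hi j, rfl⟩, h2 j⟩
  obtain ⟨z0, hz0⟩ := key v' i0 (fun j => (hei j).1) he' hv'
  set v1 := Function.update v' i0 (v' i0 + (z0, -(v' i0).2)) with hv1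
  have l1 : locA k (Set.range v1) = locA k (Set.range v) := by
    rw [hv1, locA_update _ _ _ hz0, hv']
  have he1 : ∀ j, (v1 (e j)).2 = φ j := by
    intro j
    rw [hv1, Function.update_of_ne (hei j).1, he']
  obtain ⟨z1, hz1⟩ := key v1 i1 (fun j => (hei j).2) he1 l1
  refine ⟨Function.update v1 i1 (v1 i1 + (z1, -(v1 i1).2)), ?_, e, i0, i1, hne, hinj, hU', ?_,
    ?_, ?_⟩
  · rw [locA_update _ _ _ hz1, l1]
  · intro j
    rw [Function.update_of_ne (hei j).2, he1]
  · rw [Function.update_of_ne hne, hv1]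
    simp
  · simp
end locsec

open MvPolynomial ProjSp

section EAsec
variable {k L κ σ : Type} [Field k] [Field L] [Field κ] [Algebra k L] [Algebra k κ]

/-- graded multiplicative predicates on polynomials -/
structure GrPred (k σ : Type) [Field k] where
  pr : ℕ → MvPolynomial σ k → Prop
  hC : ∀ c, pr 0 (C c)
  hadd : ∀ {d P Q}, pr d P → pr d Q → pr d (P + Q)
  hmul : ∀ {d e P Q}, pr d P → pr e Q → pr (d + e) (P * Q)

def EA (g : GrPred k σ) (b : σ → L) (b' : σ → κ) : Subalgebra k (L × κ) where
  carrier := {z | ∃ d P Q, g.pr d P ∧ g.pr d Q ∧ aeval b' Q ≠ 0 ∧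
    z.1 * aeval b Q = aeval b P ∧ z.2 * aeval b' Q = aeval b' P}
  mul_mem' := by
    rintro z w ⟨d, P, Q, hP, hQ, h0, h1, h2⟩ ⟨d', P', Q', hP', hQ', h0', h1', h2'⟩
    refine ⟨_, _, _, g.hmul hP hP', g.hmul hQ hQ', ?_, ?_, ?_⟩
    · rw [map_mul]; exact mul_ne_zero h0 h0'
    · rw [map_mul, map_mul, ← h1, ← h1', Prod.fst_mul]; ring
    · rw [map_mul, map_mul, ← h2, ← h2', Prod.snd_mul]; ring
  add_mem' := by
    rintro z w ⟨d, P, Q, hP, hQ, h0, h1, h2⟩ ⟨d', P', Q', hP', hQ', h0', h1', h2'⟩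
    refine ⟨d + d', P * Q' + Q * P', Q * Q', g.hadd (g.hmul hP hQ') (g.hmul hQ hP'),
      g.hmul hQ hQ', ?_, ?_, ?_⟩
    · rw [map_mul]; exact mul_ne_zero h0 h0'
    · rw [map_mul, map_add, map_mul, map_mul, ← h1, ← h1', Prod.fst_add]; ring
    · rw [map_mul, map_add, map_mul, map_mul, ← h2, ← h2', Prod.snd_add]; ring
  algebraMap_mem' := by
    intro c
    refine ⟨0, C c, C 1, g.hC c, g.hC 1, ?_, ?_, ?_⟩
    · simp
    · simp
    · simp

theorem EA_closed (g : GrPred k σ) (b : σ → L) (b' : σ → κ)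
    (hs : ∀ P : MvPolynomial σ k, aeval b P = 0 → aeval b' P = 0) : LocClosed (EA g b b') := by
  rintro z ⟨d, P, Q, hP, hQ, h0, h1, h2⟩ hz
  have hb' : aeval b' P ≠ 0 := by rw [← h2]; exact mul_ne_zero hz h0
  have hb : aeval b P ≠ 0 := fun h => hb' (hs _ h)
  have hz1 : z.1 ≠ 0 := by
    intro h
    rw [h, zero_mul] at h1
    exact hb h1.symm
  refine ⟨d, Q, P, hQ, hP, hb', ?_, ?_⟩
  · rw [← h1, Prod.fst_inv]; field_simp
  · rw [← h2, Prod.snd_inv]; field_simp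

theorem EA_fun (g : GrPred k σ) (b : σ → L) (b' : σ → κ)
    (hs : ∀ P : MvPolynomial σ k, aeval b P = 0 → aeval b' P = 0) (c : κ) (h : (0, c) ∈ EA g b b') : c = 0 := by
  obtain ⟨d, P, Q, hP, hQ, h0, h1, h2⟩ := h
  simp only [zero_mul] at h1
  rw [hs P h1.symm] at h2
  exact (mul_eq_zero.mp h2).resolve_right h0

def trivGr (k σ : Type) [Field k] : GrPred k σ :=
  ⟨fun _ _ => True, fun _ => trivial, fun _ _ => trivial, fun _ _ => trivial⟩

def homGr (k σ : Type) [Field k] : GrPred k σ :=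
  ⟨fun d P => P.IsHomogeneous d, fun c => isHomogeneous_C _ c, fun h h' => h.add h',
    fun h h' => h.mul h'⟩

theorem locA_zero {J : Type} (v : J → L × κ) (hv : AlgebraicIndependent k (fun j => (v j).2))
    (hs : ∀ P : MvPolynomial J k, aeval (fun j => (v j).1) P = 0 → aeval (fun j => (v j).2) P = 0)
    (y : L × κ) (hy : y ∈ locA k (Set.range v)) (h0 : y.2 = 0) : y = 0 := by
  have : locA k (Set.range v) ≤
      EA (trivGr k J) (fun j => (v j).1) (fun j => (v j).2) := by
    apply locA_le (EA_closed _ _ _ hs)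
    rintro _ ⟨j, rfl⟩
    refine ⟨0, X j, 1, trivial, trivial, ?_, ?_, ?_⟩ <;> simp
  obtain ⟨d, P, Q, -, -, hQ, h1, h2⟩ := this hy
  rw [h0, zero_mul] at h2
  have hP : P = 0 := by
    have := hv
    rw [algebraicIndependent_iff] at this
    exact this P h2.symm
  rw [hP, map_zero] at h1
  have : y.1 = 0 := (mul_eq_zero.mp h1).resolve_right (fun h => hQ (hs _ h))
  exact Prod.ext this h0

theorem alg_of_mem_adjoin {s : Set κ} {x : κ} (hx : x ∈ IntermediateField.adjoin k s) :
    IsAlgebraic (Algebra.adjoin k s) x := by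
  induction hx using IntermediateField.adjoin_induction with
  | mem x hx =>
    exact isAlgebraic_algebraMap (⟨x, Algebra.subset_adjoin hx⟩ : Algebra.adjoin k s)
  | algebraMap x =>
    exact isAlgebraic_algebraMap (algebraMap k (Algebra.adjoin k s) x)
  | add x y _ _ h1 h2 => exact h1.add h2
  | inv x _ h1 => exact h1.inv
  | mul x y _ _ h1 h2 => exact h1.mul h2

theorem mul_inv_pair {x : L × κ} (h1 : x.1 ≠ 0) (h2 : x.2 ≠ 0) : x * x⁻¹ = 1 :=
  Prod.ext (mul_inv_cancel₀ h1) (mul_inv_cancel₀ h2)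

/-- decomposition modulo the ideal generated by two elements with zero residue -/
theorem decomp {R V E : Subalgebra k (L × κ)} (hR : LocClosed R) (hV : LocClosed V)
    (hRV : R ≤ V) (hVE : V ≤ E) (hE0 : ∀ c, ((0 : L), c) ∈ E → c = 0) {A B : L × κ}
    (hA : A ∈ V) (hB : B ∈ V) (hA2 : A.2 = 0) (hB2 : B.2 = 0) {s : Set (L × κ)}
    (hs : ∀ x ∈ s, x ∈ R ∨ x = A ∨ x = B) (x : L × κ) (hx : x ∈ locA k s) :
    ∃ y ∈ R, ∃ α ∈ V, ∃ β ∈ V, x = y + α * A + β * B := by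
  let W : Subalgebra k (L × κ) :=
    { carrier := {x | ∃ y ∈ R, ∃ α ∈ V, ∃ β ∈ V, x = y + α * A + β * B}
      mul_mem' := by
        rintro x x' ⟨y, hy, α, hα, β, hβ, rfl⟩ ⟨y', hy', α', hα', β', hβ', rfl⟩
        refine ⟨y * y', mul_mem hy hy', y * α' + α * y' + α * α' * A + α * β' * B, ?_,
          y * β' + β * y' + β * α' * A + β * β' * B, ?_, by ring⟩
        · exact add_mem (add_mem (add_mem (mul_mem (hRV hy) hα') (mul_mem hα (hRV hy')))
            (mul_mem (mul_mem hα hα') hA)) (mul_mem (mul_mem hα hβ') hB)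
        · exact add_mem (add_mem (add_mem (mul_mem (hRV hy) hβ') (mul_mem hβ (hRV hy')))
            (mul_mem (mul_mem hβ hα') hA)) (mul_mem (mul_mem hβ hβ') hB)
      add_mem' := by
        rintro x x' ⟨y, hy, α, hα, β, hβ, rfl⟩ ⟨y', hy', α', hα', β', hβ', rfl⟩
        exact ⟨y + y', add_mem hy hy', α + α', add_mem hα hα', β + β', add_mem hβ hβ', by ring⟩
      algebraMap_mem' := fun c =>
        ⟨algebraMap _ _ c, R.algebraMap_mem c, 0, zero_mem _, 0, zero_mem _, by ring⟩ }
  have hne : ∀ z ∈ V, z.2 ≠ 0 → z.1 ≠ 0 := by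
    intro z hz h2 h1
    apply h2
    apply hE0
    rw [← h1]
    exact hVE hz
  have hWV : W ≤ V := by
    rintro x ⟨y, hy, α, hα, β, hβ, rfl⟩
    exact add_mem (add_mem (hRV hy) (mul_mem hα hA)) (mul_mem hβ hB)
  have hW : LocClosed W := by
    intro x hxW hx2
    have hxV := hWV hxW
    obtain ⟨y, hy, α, hα, β, hβ, hxy⟩ := hxW
    have hy2 : y.2 ≠ 0 := by
      rw [hxy] at hx2
      simpa [hA2, hB2] using hx2
    have e1 := mul_inv_pair (hne x hxV hx2) hx2
    have e2 := mul_inv_pair (hne y (hRV hy) hy2) hy2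
    have hxi := hV x hxV hx2
    have hyi := hR y hy hy2
    refine ⟨y⁻¹, hyi, -(x⁻¹ * y⁻¹ * α), ?_, -(x⁻¹ * y⁻¹ * β), ?_, ?_⟩
    · exact neg_mem (mul_mem (mul_mem hxi (hRV hyi)) hα)
    · exact neg_mem (mul_mem (mul_mem hxi (hRV hyi)) hβ)
    · have h3 : x⁻¹ * y⁻¹ * x = x⁻¹ * y⁻¹ * (y + α * A + β * B) := by rw [← hxy]
      linear_combination y⁻¹ * e1 - h3 - x⁻¹ * e2
  have : locA k s ≤ W := by
    apply locA_le hW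
    intro x hx
    rcases hs x hx with h | rfl | rfl
    · exact ⟨x, h, 0, zero_mem _, 0, zero_mem _, by ring⟩
    · exact ⟨0, zero_mem _, 1, one_mem _, 0, zero_mem _, by ring⟩
    · exact ⟨0, zero_mem _, 0, zero_mem _, 1, one_mem _, by ring⟩
  exact this hx

theorem core {ι : Type} [Fintype ι] [DecidableEq ι] [CharZero k] {m : ℕ}
    (hι : Fintype.card ι = m + 2) (E : Subalgebra k (L × κ)) (hE : LocClosed E)
    (hE0 : ∀ c, ((0 : L), c) ∈ E → c = 0) (v : ι → L × κ) (hvE : ∀ i, v i ∈ E) (φ : Fin m → κ)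
    (hφ : AlgebraicIndependent k φ)
    (hv : IntermediateField.adjoin k (Set.range φ) =
      IntermediateField.adjoin k (Prod.snd '' Set.range v))
    (f t : L) (t' : κ) (hf0 : f ≠ 0) (hf : (f, 0) ∈ locA k (Set.range v))
    (htf : (t * f, 0) ∈ locA k (Set.range v)) (htE : (t, t') ∈ E)
    (ht : ¬ IsAlgebraic (Algebra.adjoin k (Set.range φ)) t')
    (hdiv : ∀ z, (z, 0) ∈ E → ∃ c, (z / f, c) ∈ E) :
    ∃ (w : ι → L × κ) (i0 : ι), (∀ i, w i ∈ E) ∧ (w i0).2 = 0 ∧ (w i0).1 ≠ 0 ∧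
      (∀ P : MvPolynomial ι k, aeval (fun i => (w i).2) P = 0 →
        aeval (fun i => if i = i0 then (0 : MvPolynomial ι k) else X i) P = 0) ∧
      locA k (Set.range v) ≤ locA k (Set.range w) ∧ (t, t') ∈ locA k (Set.range w) := by
  obtain ⟨v', hv', e, i0, i1, hne, hinj, hre, he, h0, h1⟩ := chain_end hι φ hφ v hv
  have hVE : locA k (Set.range v) ≤ E := locA_le hE (by rintro _ ⟨i, rfl⟩; exact hvE i)
  have hvV : ∀ i, v' i ∈ locA k (Set.range v) := fun i => hv' ▸ subset_locA _ ⟨i, rfl⟩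
  have hv'E : ∀ i, v' i ∈ E := fun i => hVE (hvV i)
  have hne' : ∀ z ∈ E, z.2 ≠ 0 → z.1 ≠ 0 := by
    intro z hz h2 h1
    apply h2
    apply hE0
    rw [← h1]
    exact hz
  set V := locA k (Set.range v) with hVdef
  have hV : LocClosed V := locA_closed _
  set R := locA k (Set.range (v' ∘ e)) with hRdef
  have hRV : R ≤ V := by
    rw [hRdef, ← hv']
    exact locA_mono (Set.range_comp_subset_range _ _)
  have hR0 : ∀ y ∈ R, y.2 = 0 → y = 0 := by
    intro y hy hy0
    have hφ' : (fun j => ((v' ∘ e) j).2) = φ := funext he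
    refine locA_zero (v' ∘ e) (hφ' ▸ hφ) ?_ y hy hy0
    intro P hP
    apply hE0
    have : ∀ P : MvPolynomial (Fin m) k, (aeval (fun j => ((v' ∘ e) j).1) P,
        aeval (fun j => ((v' ∘ e) j).2) P) ∈ E := by
      intro P
      induction P using MvPolynomial.induction_on with
      | C a => simp only [aeval_C]; exact E.algebraMap_mem a
      | add p q hp hq => simp only [map_add]; exact add_mem hp hq
      | mul_X p i hp => simp only [map_mul, aeval_X]; exact mul_mem hp (hv'E _)
    have h2 := this P
    rwa [hP] at h2
  have hdec : ∀ z, (z, 0) ∈ V → ∃ α ∈ V, ∃ β ∈ V, (z, 0) = α * v' i0 + β * v' i1 := by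
    intro z hz
    rw [← hv'] at hz
    obtain ⟨y, hy, α, hα, β, hβ, h⟩ := decomp (R := R) (V := V) (E := E) (locA_closed _) hV hRV hVE
      hE0 (hvV i0) (hvV i1) h0 h1 (s := Set.range v') (by
        rintro _ ⟨i, rfl⟩
        by_cases hi : i ∈ ({i0, i1} : Set ι)
        · right
          rcases hi with rfl | hi
          · left; rfl
          · right; rw [hi]
        · left
          have : i ∈ Set.range e := by rw [hre]; exact hi
          obtain ⟨j, rfl⟩ := this
          exact subset_locA _ ⟨j, rfl⟩) _ hz
    have hy2 : y.2 = 0 := by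
      have := congrArg Prod.snd h
      simp [h0, h1] at this
      exact this.symm
    refine ⟨α, hα, β, hβ, ?_⟩
    rw [h, hR0 y hy hy2, zero_add]
  obtain ⟨α, hα, β, hβ, h2⟩ := hdec _ hf
  obtain ⟨α', hα', β', hβ', h3⟩ := hdec _ htf
  have hq : ∀ i, (v' i).2 = 0 → ∃ a ∈ E, (v' i).1 = f * a.1 := by
    intro i hi
    obtain ⟨c, hc⟩ := hdiv (v' i).1 (by rw [← hi]; exact hv'E i)
    exact ⟨_, hc, by simp only; field_simp⟩
  obtain ⟨a, ha, haA⟩ := hq i0 h0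
  obtain ⟨b, hb, hbB⟩ := hq i1 h1
  have hext : ∀ x ∈ E, ∀ y ∈ E, x.1 = y.1 → x = y := by
    intro x hx y hy h
    have := sub_mem hx hy
    have h5 : (x - y).2 = 0 := by
      apply hE0
      have h6 : (x - y).1 = 0 := by simp [h]
      rw [← h6]
      exact this
    exact Prod.ext h (sub_eq_zero.mp h5)
  have hsum : ∀ α ∈ V, ∀ β ∈ V, α * a + β * b ∈ E := fun α hα β hβ =>
    add_mem (mul_mem (hVE hα) ha) (mul_mem (hVE hβ) hb)
  have e1 : 1 = α * a + β * b := by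
    apply hext _ (one_mem _) _ (hsum _ hα _ hβ)
    have := congrArg Prod.fst h2
    simp only [Prod.fst_add, Prod.fst_mul, haA, hbB] at this ⊢
    apply mul_left_cancel₀ hf0
    simp only [Prod.fst_one]
    linear_combination this
  have e2 : (t, t') = α' * a + β' * b := by
    apply hext _ htE _ (hsum _ hα' _ hβ')
    have := congrArg Prod.fst h3
    simp only [Prod.fst_add, Prod.fst_mul, haA, hbB] at this ⊢
    apply mul_left_cancel₀ hf0
    linear_combination this
  have hValg : ∀ x ∈ V, IsAlgebraic (Algebra.adjoin k (Set.range φ)) x.2 := by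
    intro x hx
    apply alg_of_mem_adjoin
    rw [hv]
    exact locA_snd hx
  have e1' := congrArg Prod.snd e1
  have e2' := congrArg Prod.snd e2
  simp only [Prod.snd_add, Prod.snd_mul, Prod.snd_one] at e1' e2'
  have ha2 : a.2 ≠ 0 := by
    intro h
    rw [h, mul_zero, zero_add] at e1' e2'
    apply ht
    have hβ0 : β.2 ≠ 0 := by intro h; rw [h, zero_mul] at e1'; exact one_ne_zero e1'
    have : t' = β'.2 * (β.2)⁻¹ := by
      rw [e2']
      field_simp
      linear_combination -β'.2 * e1'
    rw [this]
    exact (hValg _ hβ').mul (hValg _ hβ).inv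
  have ha1 := hne' a ha ha2
  have haa := mul_inv_pair ha1 ha2
  set w1 := b * a⁻¹ with hw1
  have hw1E : w1 ∈ E := mul_mem hb (hE a ha ha2)
  have hden : (α + β * w1) * a = 1 := by
    rw [e1, hw1]; linear_combination β * b * haa
  have hnum : (α' + β' * w1) * a = (t, t') := by
    rw [e2, hw1]; linear_combination β' * b * haa
  have hden2 : (α + β * w1).2 * a.2 = 1 := congrArg Prod.snd hden
  have hnum2 : (α' + β' * w1).2 * a.2 = t' := congrArg Prod.snd hnum
  have hd2 : (α + β * w1).2 ≠ 0 := left_ne_zero_of_mul_eq_one hden2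
  have hd1 : (α + β * w1).1 ≠ 0 := left_ne_zero_of_mul_eq_one (congrArg Prod.fst hden)
  have hdi := mul_inv_pair hd1 hd2
  have htr : Transcendental (Algebra.adjoin k (Set.range φ)) w1.2 := by
    intro h
    apply ht
    have : t' = (α'.2 + β'.2 * w1.2) * (α.2 + β.2 * w1.2)⁻¹ := by
      have : (α.2 + β.2 * w1.2) ≠ 0 := hd2
      simp only [Prod.snd_add, Prod.snd_mul] at hden2 hnum2
      rw [← hnum2, inv_eq_of_mul_eq_one_right hden2]
    rw [this]
    exact ((hValg _ hα').add ((hValg _ hβ').mul h)).mul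
      ((hValg _ hα).add ((hValg _ hβ).mul h)).inv
  have hopt := (hφ.option_iff_transcendental w1.2).mpr htr
  set w := Function.update v' i1 w1 with hw
  have hwi0 : w i0 = v' i0 := Function.update_of_ne hne _ _
  have hwi1 : w i1 = w1 := Function.update_self _ _ _
  have hei : ∀ j, e j ≠ i0 ∧ e j ≠ i1 := by
    intro j
    have : e j ∈ ({i0, i1} : Set ι)ᶜ := hre ▸ ⟨j, rfl⟩
    simpa using this
  have hle : V ≤ locA k (Set.range w) := by
    rw [← hv']
    apply locA_le (locA_closed _)
    rintro _ ⟨i, rfl⟩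
    by_cases hi : i = i1
    · subst hi
      have : v' i = w i0 * w i := by
        rw [hwi0, hwi1, hw1]
        apply Prod.ext
        · simp only [Prod.fst_mul, haA, hbB, Prod.fst_inv]
          field_simp
        · simp only [Prod.snd_mul, h0, h1, zero_mul]
      rw [this]
      exact mul_mem (subset_locA _ ⟨i0, rfl⟩) (subset_locA _ ⟨i, rfl⟩)
    · have : v' i = w i := (Function.update_of_ne hi _ _).symm
      rw [this]
      exact subset_locA _ ⟨i, rfl⟩
  refine ⟨w, i0, ?_, ?_, ?_, ?_, hle, ?_⟩
  · intro i
    by_cases hi : i = i1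
    · subst hi; rw [hwi1]; exact hw1E
    · rw [hw, Function.update_of_ne hi]; exact hv'E i
  · rw [hwi0, h0]
  · rw [hwi0, haA]; exact mul_ne_zero hf0 ha1
  · intro P hP
    let g : Option (Fin m) → ι := fun o => o.elim i1 e
    have hg : ∀ i, i ≠ i0 → ∃ o, g o = i := by
      intro i hi
      by_cases hi1 : i = i1
      · exact ⟨none, hi1.symm⟩
      · have : i ∈ Set.range e := by
          rw [hre]; simp [hi, hi1]
        obtain ⟨j, rfl⟩ := this
        exact ⟨some j, rfl⟩
    choose! gi hgi using hg
    let q : ι → MvPolynomial (Option (Fin m)) k := fun i => if i = i0 then 0 else X (gi i)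
    have hgw : ∀ o, (w (g o)).2 = o.elim w1.2 φ := by
      intro o
      cases o with
      | none => exact congrArg Prod.snd hwi1
      | some j =>
        change (w (e j)).2 = φ j
        rw [hw, Function.update_of_ne (hei j).2, he]
    have hQ : aeval q P = 0 := by
      rw [algebraicIndependent_iff] at hopt
      apply hopt
      rw [aeval_comp, ← hP]
      congr 2
      funext i
      by_cases hi : i = i0
      · simp [q, hi, hwi0, h0]
      · simp only [q, hi, if_false, aeval_X]
        rw [← hgw, hgi i hi]
    have := congrArg (aeval (fun o => (X (g o) : MvPolynomial ι k))) hQ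
    rw [aeval_comp, map_zero] at this
    refine Eq.trans ?_ this
    congr 2
    funext i
    by_cases hi : i = i0
    · simp [q, hi]
    · simp only [q, hi, if_false, aeval_X, hgi i hi]
  · have : (t, t') = (α' + β' * w1) * (α + β * w1)⁻¹ := by
      rw [← hnum]
      linear_combination (-(α' + β' * w1) * a) * hdi + (α' + β' * w1) * (α + β * w1)⁻¹ * hden
    rw [this]
    have hw1m : w1 ∈ locA k (Set.range w) := hwi1 ▸ subset_locA _ ⟨i1, rfl⟩
    exact mul_mem (add_mem (hle hα') (mul_mem (hle hβ') hw1m))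
      (locA_closed _ _ (add_mem (hle hα) (mul_mem (hle hβ) hw1m)) hd2)
end EAsec

open MvPolynomial ProjSp

section asm
variable {k L κ σ : Type} [Field k] [Field L] [Field κ] [Algebra k L] [Algebra k κ]

theorem common {ι : Type} [Fintype ι] [DecidableEq ι] (b : σ → L) (b' : σ → κ) (v : ι → L × κ)
    (hv : ∀ i, v i ∈ EA (homGr k σ) b b') :
    ∃ (D : ℕ) (Q : MvPolynomial σ k) (P : ι → MvPolynomial σ k), Q.IsHomogeneous D ∧
      (∀ i, (P i).IsHomogeneous D) ∧ aeval b' Q ≠ 0 ∧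
      (∀ i, (v i).1 * aeval b Q = aeval b (P i)) ∧
      (∀ i, (v i).2 * aeval b' Q = aeval b' (P i)) := by
  choose d P Q hP hQ h0 h1 h2 using hv
  refine ⟨∑ i, d i, ∏ i, Q i, fun i => P i * ∏ j ∈ Finset.univ.erase i, Q j, ?_, ?_, ?_, ?_, ?_⟩
  · exact IsHomogeneous.prod _ _ _ (fun i _ => hQ i)
  · intro i
    rw [← Finset.add_sum_erase _ _ (Finset.mem_univ i)]
    exact (hP i).mul (IsHomogeneous.prod _ _ _ (fun i _ => hQ i))
  · rw [map_prod]
    exact Finset.prod_ne_zero_iff.mpr (fun i _ => h0 i)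
  · intro i
    rw [← Finset.mul_prod_erase _ _ (Finset.mem_univ i), map_mul, map_mul, ← h1]
    ring
  · intro i
    rw [← Finset.mul_prod_erase _ _ (Finset.mem_univ i), map_mul, map_mul, ← h2]
    ring

theorem pair_aeval_mem (E : Subalgebra k (L × κ)) (b : σ → L) (b' : σ → κ)
    (h : ∀ i, (b i, b' i) ∈ E) (P : MvPolynomial σ k) : (aeval b P, aeval b' P) ∈ E := by
  induction P using MvPolynomial.induction_on with
  | C a => simp only [aeval_C]; exact E.algebraMap_mem a
  | add p q hp hq => simp only [map_add]; exact add_mem hp hq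
  | mul_X p i hp => simp only [map_mul, aeval_X]; exact mul_mem hp (h _)

theorem dvd_of_dehom [IsAlgClosed k] {n e : ℕ} (i0 : Fin n)
    (w : MvPolynomial (Fin (n + 1)) k) (hw : w.IsHomogeneous e)
    (h : aeval (Fin.cons 1 (fun i => if i = i0 then (0 : MvPolynomial (Fin n) k) else X i)) w
      = 0) : X i0.succ ∣ w := by
  have hp : Prime (X i0.succ : MvPolynomial (Fin (n + 1)) k) := MvPolynomial.X_prime
  have h1 : (X i0.succ : MvPolynomial (Fin (n + 1)) k) ∣ X 0 * w := by
    apply dvd_of_vanish hp.irreducible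
    intro x hx
    rw [eval_X] at hx
    rw [map_mul, eval_X]
    by_cases hx0 : x 0 = 0
    · rw [hx0, zero_mul]
    let y : Fin n → k := fun i => x i.succ / x 0
    have h2 := congrArg (eval y) h
    rw [eval_comp, map_zero] at h2
    have h3 : x = fun i => x 0 * (fun i => eval y ((Fin.cons 1 (fun i => if i = i0 then
        (0 : MvPolynomial (Fin n) k) else X i) : Fin (n + 1) → MvPolynomial (Fin n) k) i)) i := by
      funext i
      refine Fin.cases ?_ (fun i => ?_) i
      · simp
      · by_cases hi : i = i0
        · subst hi; simp [hx]
        · simp only [Fin.cons_succ, hi, if_false, eval_X, y]; field_simp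
    have h4 := hom_eval_smul hw (x 0) (fun i => eval y ((Fin.cons 1 (fun i => if i = i0 then
        (0 : MvPolynomial (Fin n) k) else X i) : Fin (n + 1) → MvPolynomial (Fin n) k) i))
    have h5 : eval x w = _ := (congrArg (fun z => eval z w) h3).trans h4
    rw [h5, h2, mul_zero, mul_zero]
  rcases hp.dvd_or_dvd h1 with h2 | h2
  · exfalso
    rw [X_dvd_X] at h2
    simp at h2
  · exact h2

theorem assemble [IsAlgClosed k] {n d : ℕ} {f : MvPolynomial (Fin (n + 1)) k}
    (hf : Irreducible f) (hfd : f.IsHomogeneous d) (hS : (zeros k f).Nonempty)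
    (b : Fin (n + 1) → L) (b' : Fin (n + 1) → κ)
    (hL : ∀ P : MvPolynomial (Fin (n + 1)) k, aeval b P = 0 → P = 0)
    (hκ : ∀ P : MvPolynomial (Fin (n + 1)) k, aeval b' P = 0 ↔ f ∣ P)
    (w : Fin n → L × κ) (i0 : Fin n) (hwE : ∀ i, w i ∈ EA (homGr k _) b b')
    (hw2 : (w i0).2 = 0) (hw1 : (w i0).1 ≠ 0)
    (hind : ∀ P : MvPolynomial (Fin n) k, aeval (fun i => (w i).2) P = 0 →
        aeval (fun i => if i = i0 then (0 : MvPolynomial (Fin n) k) else X i) P = 0)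
    (l : MvPolynomial (Fin (n + 1)) k) (hl : l.IsHomogeneous 1) (hfl : ¬ f ∣ l)
    (hx : ∀ a, (b a / aeval b l, b' a / aeval b' l) ∈ locA k (Set.range w)) :
    CremonaEquivalent k (zeros k f) (zeros k (X i0.succ)) := by
  have hs : ∀ P : MvPolynomial (Fin (n + 1)) k, aeval b P = 0 → aeval b' P = 0 := by
    intro P h
    rw [hL P h, map_zero]
  have hl0 : aeval b l ≠ 0 := by
    intro h
    exact hfl (hL _ h ▸ dvd_zero _)
  obtain ⟨dF, Q, P, hQ, hP, hQ0, h1, h2⟩ := common b b' w hwE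
  have hQb : aeval b Q ≠ 0 := fun h => hQ0 (hs _ h)
  let F : Fin (n + 1) → MvPolynomial (Fin (n + 1)) k := Fin.cons Q P
  let W : Fin (n + 1) → L := Fin.cons 1 (fun i => (w i).1)
  let W' : Fin (n + 1) → κ := Fin.cons 1 (fun i => (w i).2)
  have hF : ∀ i, (F i).IsHomogeneous dF := by
    intro i
    refine Fin.cases ?_ (fun i => ?_) i
    · exact hQ
    · exact hP i
  have hbF : (fun i => aeval b (F i)) = fun i => aeval b Q * W i := by
    funext i
    refine Fin.cases ?_ (fun i => ?_) i
    · simp [F, W]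
    · simp only [F, W, Fin.cons_succ, ← h1]; ring
  have hbF' : (fun i => aeval b' (F i)) = fun i => aeval b' Q * W' i := by
    funext i
    refine Fin.cases ?_ (fun i => ?_) i
    · simp [F, W']
    · simp only [F, W', Fin.cons_succ, ← h2]; ring
  have hcomp : ∀ {e} {p : MvPolynomial (Fin (n + 1)) k}, p.IsHomogeneous e →
      aeval b (aeval F p) = aeval b Q ^ e * aeval W p := by
    intro e p hp
    rw [aeval_comp, hbF, hom_aeval_mul hp]
  have hcomp' : ∀ {e} {p : MvPolynomial (Fin (n + 1)) k}, p.IsHomogeneous e →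
      aeval b' (aeval F p) = aeval b' Q ^ e * aeval W' p := by
    intro e p hp
    rw [aeval_comp, hbF', hom_aeval_mul hp]
  have hWs : ∀ p : MvPolynomial (Fin (n + 1)) k, aeval W p = 0 → aeval W' p = 0 := by
    intro p hp
    apply EA_fun (homGr k _) b b' hs
    rw [← hp]
    apply pair_aeval_mem
    intro i
    refine Fin.cases ?_ (fun i => ?_) i
    · exact one_mem _
    · exact hwE i
  have hle : locA k (Set.range w) ≤ EA (homGr k _) W W' := by
    apply locA_le (EA_closed _ _ _ hWs)
    rintro _ ⟨i, rfl⟩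
    refine ⟨1, X i.succ, X 0, isHomogeneous_X _ _, isHomogeneous_X _ _, ?_, ?_, ?_⟩ <;>
      simp [W, W']
  obtain ⟨dG, T, G, hT, hG, hT0, g1, g2⟩ := common W W' _ (fun a => hle (hx a))
  refine crit hf hfd hS F G hF hG l (aeval F T) hl (hT.aeval _ hF) ?_ hfl ?_ i0.succ
    (Fin.succ_ne_zero _) ?_ ?_ ?_ ?_
  · intro a
    rw [← sub_eq_zero]
    apply hL
    rw [map_sub, map_mul, map_mul, hcomp (hG a), hcomp hT, ← g1 a, aeval_X]
    field_simp
    ring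
  · rw [← hκ, hcomp' hT]
    exact mul_ne_zero (pow_ne_zero _ hQ0) hT0
  · rw [← hκ]; exact hQ0
  · rw [← hκ]
    change aeval b' (P i0) = 0
    rw [← h2, hw2, zero_mul]
  · change P i0 ≠ 0
    intro h
    have := h1 i0
    rw [h, map_zero] at this
    exact mul_ne_zero hw1 hQb this
  · intro e p hp hfp
    rw [← hκ, hcomp' hp] at hfp
    have h3 : aeval W' p = 0 := (mul_eq_zero.mp hfp).resolve_left (pow_ne_zero _ hQ0)
    apply dvd_of_dehom i0 p hp
    have h4 := hind (aeval (Fin.cons 1 (fun i => X i)) p) ?_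
    · rw [aeval_comp] at h4
      refine Eq.trans ?_ h4
      congr 2
      funext i
      refine Fin.cases ?_ (fun i => ?_) i
      · simp
      · simp only [Fin.cons_succ, aeval_X]
    · rw [aeval_comp]
      refine Eq.trans ?_ h3
      congr 2
      funext i
      refine Fin.cases ?_ (fun i => ?_) i
      · simp [W']
      · simp only [W', Fin.cons_succ, aeval_X]

theorem exists_fields {f : MvPolynomial σ k} (hf : Irreducible f) :
    ∃ (L κ : Type) (_ : Field L) (_ : Field κ) (_ : Algebra k L) (_ : Algebra k κ)
      (b : σ → L) (b' : σ → κ), (∀ P : MvPolynomial σ k, aeval b P = 0 → P = 0) ∧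
      (∀ P : MvPolynomial σ k, aeval b' P = 0 ↔ f ∣ P) ∧
      IntermediateField.adjoin k (Set.range b') = ⊤ := by
  have hp : (Ideal.span {f}).IsPrime := by
    rw [Ideal.span_singleton_prime hf.ne_zero]
    exact hf.prime
  let A := MvPolynomial σ k ⧸ Ideal.span {f}
  let κ := FractionRing A
  let L := FractionRing (MvPolynomial σ k)
  let gL : MvPolynomial σ k →ₐ[k] L := IsScalarTower.toAlgHom k _ _
  let gκ : MvPolynomial σ k →ₐ[k] κ :=
    (IsScalarTower.toAlgHom k A κ).comp (Ideal.Quotient.mkₐ k _)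
  have e1 : ∀ P, aeval (fun i => gL (X i)) P = gL P := by
    intro P
    rw [← MvPolynomial.comp_aeval_apply, aeval_X_left_apply]
  have e2 : ∀ P, aeval (fun i => gκ (X i)) P = gκ P := by
    intro P
    rw [← MvPolynomial.comp_aeval_apply, aeval_X_left_apply]
  refine ⟨L, κ, inferInstance, inferInstance, inferInstance, inferInstance,
    fun i => gL (X i), fun i => gκ (X i), ?_, ?_, ?_⟩
  · intro P h
    rw [e1] at h
    exact (IsFractionRing.injective (MvPolynomial σ k) L) (h.trans (map_zero _).symm)
  · intro P
    rw [e2]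
    change algebraMap A κ (Ideal.Quotient.mk _ P) = 0 ↔ _
    rw [IsFractionRing.to_map_eq_zero_iff, Ideal.Quotient.eq_zero_iff_mem,
      Ideal.mem_span_singleton]
  · rw [eq_top_iff]
    intro x _
    obtain ⟨a, c, hc, rfl⟩ := IsFractionRing.div_surjective (A := A) x
    have : ∀ a : A, algebraMap A κ a ∈
        IntermediateField.adjoin k (Set.range fun i => gκ (X i)) := by
      intro a
      obtain ⟨P, rfl⟩ := Ideal.Quotient.mk_surjective a
      change gκ P ∈ _
      rw [← e2]
      induction P using MvPolynomial.induction_on with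
      | C a => simp only [aeval_C]; exact IntermediateField.algebraMap_mem _ a
      | add p q hp hq => simp only [map_add]; exact add_mem hp hq
      | mul_X p i hp =>
        simp only [map_mul, aeval_X]
        exact mul_mem hp (IntermediateField.subset_adjoin _ _ ⟨i, rfl⟩)
    exact div_mem (this a) (this c)
end asm

open MvPolynomial ProjSp

section algmain
variable {k L κ : Type} [Field k] [Field L] [Field κ] [Algebra k L] [Algebra k κ]

theorem alg_main [IsAlgClosed k] [CharZero k] {m d : ℕ}
    {f : MvPolynomial (Fin (m + 2 + 1)) k}
    (hf : Irreducible f) (hfd : f.IsHomogeneous d) (hS : (zeros k f).Nonempty)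
    (b : Fin (m + 2 + 1) → L) (b' : Fin (m + 2 + 1) → κ)
    (hL : ∀ P : MvPolynomial (Fin (m + 2 + 1)) k, aeval b P = 0 → P = 0)
    (hκ : ∀ P : MvPolynomial (Fin (m + 2 + 1)) k, aeval b' P = 0 ↔ f ∣ P)
    (l : Fin (m + 2) → MvPolynomial (Fin (m + 2 + 1)) k) (hl : ∀ i, (l i).IsHomogeneous 1)
    (hfl : ¬ f ∣ l 0)
    (ll : MvPolynomial (Fin (m + 2 + 1)) k) (hll : ll.IsHomogeneous 1)
    (N : Fin (m + 2) → Fin (m + 2 + 1) → k) (pv : Fin (m + 2 + 1) → k)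
    (hX : ∀ a, X a = ∑ i, C (N i a) * l i + C (pv a) * ll)
    (fh : MvPolynomial (Fin (m + 2)) k) (hfh : fh.IsHomogeneous d) (hffh : f = aeval l fh)
    (φ : Fin m → κ) (hφ : AlgebraicIndependent k φ)
    (hφK : IntermediateField.adjoin k (Set.range φ) =
      IntermediateField.adjoin k (Set.range (fun i => aeval b' (l i) / aeval b' (l 0))))
    (ht : ¬ IsAlgebraic (Algebra.adjoin k (Set.range φ)) (aeval b' ll / aeval b' (l 0))) :
    ∃ j, CremonaEquivalent k (zeros k f) (zeros k (X j)) := by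
  have hs : ∀ P : MvPolynomial (Fin (m + 2 + 1)) k, aeval b P = 0 → aeval b' P = 0 := by
    intro P h
    rw [hL P h, map_zero]
  set E := EA (homGr k _) b b' with hEdef
  have hE : LocClosed E := EA_closed _ _ _ hs
  have hE0 : ∀ c, ((0 : L), c) ∈ E → c = 0 := EA_fun _ _ _ hs
  have hl' : aeval b' (l 0) ≠ 0 := by rwa [Ne, hκ]
  have hl0 : aeval b (l 0) ≠ 0 := fun h => hl' (hs _ h)
  have hlin : ∀ p : MvPolynomial (Fin (m + 2 + 1)) k, p.IsHomogeneous 1 →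
      (aeval b p / aeval b (l 0), aeval b' p / aeval b' (l 0)) ∈ E := by
    intro p hp
    refine ⟨1, p, l 0, hp, hl 0, hl', ?_, ?_⟩
    · simp only; field_simp
    · simp only; field_simp
  set y : Fin (m + 2) → L := fun i => aeval b (l i) / aeval b (l 0) with hy
  set y' : Fin (m + 2) → κ := fun i => aeval b' (l i) / aeval b' (l 0) with hy'
  set t := aeval b ll / aeval b (l 0) with htdef
  set t' := aeval b' ll / aeval b' (l 0) with ht'def
  have hbf : aeval b f ≠ 0 := fun h => hf.ne_zero (hL _ h)
  have hb'f : aeval b' f = 0 := by rw [hκ]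
  set ft := aeval b f / aeval b (l 0) ^ d with hftdef
  have hft0 : ft ≠ 0 := div_ne_zero hbf (pow_ne_zero _ hl0)
  have hfty : ft = aeval y fh := by
    have h1 : (fun i => aeval b (l i)) = fun i => aeval b (l 0) * y i := by
      funext i
      rw [hy]
      field_simp
    rw [hftdef, div_eq_iff (pow_ne_zero _ hl0), mul_comm, ← hom_aeval_mul hfh, ← h1, hffh,
      aeval_comp]
  have hfty' : aeval y' fh = 0 := by
    have h1 : (fun i => aeval b' (l i)) = fun i => aeval b' (l 0) * y' i := by
      funext i
      rw [hy']
      field_simp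
    have h2 : aeval b' f = aeval b' (l 0) ^ d * aeval y' fh := by
      rw [← hom_aeval_mul hfh, ← h1, hffh, aeval_comp]
    rw [hb'f] at h2
    exact (mul_eq_zero.mp h2.symm).resolve_left (pow_ne_zero _ hl')
  have hyE : ∀ i, (y i, y' i) ∈ E := fun i => hlin _ (hl i)
  have htE : (t, t') ∈ E := hlin _ hll
  have hftE : (ft, (0 : κ)) ∈ E := by
    rw [hfty, ← hfty']
    exact pair_aeval_mem E y y' hyE fh
  have hy0 : y 0 = 1 := div_self hl0
  have hy0' : y' 0 = 1 := div_self hl'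
  let v : Fin (m + 2) → L × κ := fun i => if i = 0 then (t * ft, 0) else (y i, y' i)
  have hv0 : v 0 = (t * ft, 0) := if_pos rfl
  have hvi : ∀ i, i ≠ 0 → v i = (y i, y' i) := fun i hi => if_neg hi
  have hvE : ∀ i, v i ∈ E := by
    intro i
    by_cases hi : i = 0
    · rw [hi, hv0]
      have := mul_mem htE hftE
      rwa [Prod.mk_mul_mk, mul_zero] at this
    · rw [hvi i hi]; exact hyE i
  have hyV : ∀ i, (y i, y' i) ∈ locA k (Set.range v) := by
    intro i
    by_cases hi : i = 0
    · rw [hi, hy0, hy0']; exact one_mem _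
    · rw [← hvi i hi]; exact subset_locA _ ⟨i, rfl⟩
  have hftV : (ft, (0 : κ)) ∈ locA k (Set.range v) := by
    rw [hfty, ← hfty']
    exact pair_aeval_mem _ y y' hyV fh
  have hadj : IntermediateField.adjoin k (Set.range φ) =
      IntermediateField.adjoin k (Prod.snd '' Set.range v) := by
    rw [hφK]
    apply le_antisymm
    · rw [IntermediateField.adjoin_le_iff]
      rintro _ ⟨i, rfl⟩
      exact locA_snd (hyV i)
    · rw [IntermediateField.adjoin_le_iff]
      rintro _ ⟨_, ⟨i, rfl⟩, rfl⟩
      by_cases hi : i = 0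
      · rw [hi, hv0]; exact zero_mem _
      · rw [hvi i hi]; exact IntermediateField.subset_adjoin _ _ ⟨i, rfl⟩
  have hdiv : ∀ z, (z, (0 : κ)) ∈ E → ∃ c, (z / ft, c) ∈ E := by
    rintro z ⟨e, P, Q, hP, hQ, h0, h1, h2⟩
    simp only [zero_mul] at h1 h2
    have hQb : aeval b Q ≠ 0 := fun h => h0 (hs _ h)
    obtain ⟨g, rfl⟩ := (hκ P).mp h2.symm
    by_cases hg : f * g = 0
    · rw [hg, map_zero] at h1
      have : z = 0 := (mul_eq_zero.mp h1).resolve_right hQb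
      refine ⟨0, ?_⟩
      rw [this, zero_div]
      exact zero_mem _
    · obtain ⟨hde, hgh⟩ := hom_of_mul hfd hf.ne_zero hP hg
      refine ⟨aeval b' (g * l 0 ^ d) / aeval b' Q, e, g * l 0 ^ d, Q, ?_, hQ, h0, ?_, ?_⟩
      · have := hgh.mul ((hl 0).pow d)
        rwa [one_mul, Nat.sub_add_cancel hde] at this
      · simp only
        rw [hftdef, map_mul, map_pow, div_div_eq_mul_div, div_mul_eq_mul_div,
          div_eq_iff hbf]
        rw [map_mul] at h1
        linear_combination aeval b (l 0) ^ d * h1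
      · simp only; field_simp
  obtain ⟨w, i0, hwE, hw2, hw1, hind, hle, htw⟩ := core (by simp) E hE hE0 v hvE φ hφ hadj ft t t'
    hft0 hftV (by rw [← hv0]; exact subset_locA _ ⟨0, rfl⟩) htE ht hdiv
  refine ⟨i0.succ, assemble hf hfd hS b b' hL hκ w i0 hwE hw2 hw1 hind (l 0) (hl 0) hfl ?_⟩
  intro a
  have : (b a / aeval b (l 0), b' a / aeval b' (l 0)) =
      ∑ i, N i a • (y i, y' i) + pv a • (t, t') := by
    apply Prod.ext
    · have h1 := congrArg (aeval b) (hX a)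
      simp only [map_add, map_sum, map_mul, aeval_X, aeval_C] at h1
      simp only [Prod.fst_add, Prod.fst_sum, Algebra.smul_def]
      rw [h1, add_div, Finset.sum_div]
      simp only [y, t, mul_div_assoc]
      rfl
    · have h1 := congrArg (aeval b') (hX a)
      simp only [map_add, map_sum, map_mul, aeval_X, aeval_C] at h1
      simp only [Prod.snd_add, Prod.snd_sum, Algebra.smul_def]
      rw [h1, add_div, Finset.sum_div]
      simp only [y', t', mul_div_assoc]
      rfl
  rw [this]
  exact add_mem (sum_mem fun i _ => Subalgebra.smul_mem _ (hle (hyV i)) _)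
    (Subalgebra.smul_mem _ htw _)
end algmain

open MvPolynomial ProjSp

section linsec
variable {k : Type} [Field k]

noncomputable def linP {n : ℕ} (μ : (Fin n → k) →ₗ[k] k) : MvPolynomial (Fin n) k :=
  ∑ a, C (μ (fun j => if a = j then 1 else 0)) * X a

theorem linP_hom {n : ℕ} (μ : (Fin n → k) →ₗ[k] k) : (linP μ).IsHomogeneous 1 :=
  IsHomogeneous.sum _ _ _ (fun _ _ => isHomogeneous_C_mul_X _ _)

theorem eval_linP {n : ℕ} (μ : (Fin n → k) →ₗ[k] k) (x : Fin n → k) : eval x (linP μ) = μ x := by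
  rw [linP, map_sum, LinearMap.pi_apply_eq_sum_univ μ x]
  simp [mul_comm]

theorem exists_lin {n : ℕ} (h : MvPolynomial (Fin n) k) (hh : h.IsHomogeneous 1) :
    ∃ μ : (Fin n → k) →ₗ[k] k, ∀ x, eval x h = μ x := by
  have hh' : h ∈ homogeneousSubmodule (Fin n) k 1 := hh
  rw [homogeneousSubmodule_one_eq_span_X] at hh'
  induction hh' using Submodule.span_induction with
  | mem x hx =>
    obtain ⟨i, rfl⟩ := hx
    exact ⟨LinearMap.proj i, fun x => by simp⟩
  | zero => exact ⟨0, fun x => by simp⟩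
  | add p q hp hq h1 h2 =>
    rw [← homogeneousSubmodule_one_eq_span_X] at hp hq
    obtain ⟨μ, hμ⟩ := h1 hp
    obtain ⟨ν, hν⟩ := h2 hq
    exact ⟨μ + ν, fun x => by simp [hμ, hν]⟩
  | smul a p hp h1 =>
    rw [← homogeneousSubmodule_one_eq_span_X] at hp
    obtain ⟨μ, hμ⟩ := h1 hp
    exact ⟨a • μ, fun x => by simp [hμ, smul_eval]⟩

/-- coordinates adapted to a point `p` and a hyperplane `h = 0` missing it. -/
theorem lin_split {n : ℕ} (h : MvPolynomial (Fin (n + 1)) k) (hh : h.IsHomogeneous 1)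
    (p : Fin (n + 1) → k) (hp : eval p h ≠ 0) :
    ∃ (la : (Fin (n + 1) → k) →ₗ[k] k) (μ : Fin n → (Fin (n + 1) → k) →ₗ[k] k)
      (N : Fin n → Fin (n + 1) → k),
      (∀ x, eval x h = 0 ↔ la x = 0) ∧ la p = 1 ∧ (∀ i, la (N i) = 0) ∧ (∀ i, μ i p = 0) ∧
      (∀ i, μ i (N i) = 1) ∧ ∀ x, x = ∑ i, μ i x • N i + la x • p := by
  obtain ⟨l0, hl0⟩ := exists_lin h hh
  rw [hl0] at hp
  let la := (l0 p)⁻¹ • l0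
  have hlap : la p = 1 := by simp [la, hp]
  have hfr : Module.finrank k (LinearMap.ker la) = n := by
    have h1 := LinearMap.finrank_range_add_finrank_ker la
    have h2 : LinearMap.range la = ⊤ := by
      rw [LinearMap.range_eq_top]
      intro c
      exact ⟨c • p, by simp [hlap]⟩
    rw [h2, finrank_top, Module.finrank_self, Module.finrank_fin_fun] at h1
    omega
  let B := Module.finBasisOfFinrankEq k (LinearMap.ker la) hfr
  let pr : (Fin (n + 1) → k) →ₗ[k] LinearMap.ker la :=
    LinearMap.codRestrict (LinearMap.ker la) (LinearMap.id - la.smulRight p) (by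
      intro x
      simp [hlap])
  have hpr : ∀ x, (pr x : Fin (n + 1) → k) = x - la x • p := fun x => rfl
  refine ⟨la, fun i => (B.coord i).comp pr, fun i => (B i : Fin (n + 1) → k), ?_, hlap, ?_, ?_, ?_,
    ?_⟩
  · intro x
    rw [hl0]
    simp [la, hp]
  · intro i
    exact (B i).2
  · intro i
    have : pr p = 0 := by
      apply Subtype.ext
      rw [hpr, hlap]
      simp
    simp [this]
  · intro i
    have : pr (B i) = B i := by
      apply Subtype.ext
      rw [hpr, show la (B i) = 0 from (B i).2]
      simp
    simp [this]
  · intro x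
    have h1 := congrArg Subtype.val (B.sum_repr (pr x))
    rw [hpr, Submodule.coe_sum] at h1
    rw [eq_comm, ← eq_sub_iff_add_eq, ← h1]
    rfl

theorem cone_add {n d : ℕ} {f : MvPolynomial (Fin (n + 1)) k} (hd : 0 < d)
    (hfd : f.IsHomogeneous d) {p : ProjSp k n} (hc : IsConeWithVertex k (zeros k f) p)
    (x : Fin (n + 1) → k) (s : k) (hx : eval x f = 0) : eval (x + s • p.rep) f = 0 := by
  by_cases h0 : x = 0
  · rw [h0, zero_add, hom_eval_smul hfd]
    have : eval p.rep f = 0 := hc.1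
    rw [this, mul_zero]
  by_cases h1 : x + s • p.rep = 0
  · rw [h1]; exact hom_eval_zero hfd hd.ne'
  rw [← mk_mem_zeros hfd _ h1]
  apply hc.2 _ ((mk_mem_zeros hfd _ h0).mpr hx)
  simp only [lineThrough, Set.mem_ofPred_eq]
  rw [Projectivization.submodule_mk, Projectivization.submodule_mk, Projectivization.submodule_eq,
    Submodule.span_singleton_le_iff_mem]
  rw [add_comm x]
  exact Submodule.add_mem_sup (Submodule.smul_mem _ _ (Submodule.mem_span_singleton_self _))
    (Submodule.mem_span_singleton_self _)

/-- affine version of rationality -/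
theorem rat_affine {n m d : ℕ} {f h : MvPolynomial (Fin (n + 1)) k} (hfd : f.IsHomogeneous d)
    (hh : h.IsHomogeneous 1) (F : RatMap k n m) (G : RatMap k m n)
    (hb : IsBirationalOn k F G (zeros k f ∩ zeros k h) Set.univ) :
    ∃ (u : MvPolynomial (Fin (n + 1)) k) (v : MvPolynomial (Fin (m + 1)) k),
      (∃ x, x ≠ 0 ∧ eval x f = 0 ∧ eval x h = 0 ∧ eval x u ≠ 0) ∧
      (∃ y, y ≠ 0 ∧ eval y v ≠ 0) ∧
      (∀ x, x ≠ 0 → eval x f = 0 → eval x h = 0 → eval x u ≠ 0 →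
        (fun j => eval x (F.comp j)) ≠ 0 ∧ ∃ c : k, c ≠ 0 ∧
          (fun a => eval (fun j => eval x (F.comp j)) (G.comp a)) = c • x) ∧
      (∀ y, y ≠ 0 → eval y v ≠ 0 →
        (fun a => eval y (G.comp a)) ≠ 0 ∧ eval (fun a => eval y (G.comp a)) f = 0 ∧
        eval (fun a => eval y (G.comp a)) h = 0 ∧ ∃ c : k, c ≠ 0 ∧
          (fun j => eval (fun a => eval y (G.comp a)) (F.comp j)) = c • y) := by
  obtain ⟨u, v, du, dv, hu, hv, hAu, hBv, h1, h2⟩ := hb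
  refine ⟨u, v, ?_, ?_, ?_, ?_⟩
  · rw [Set.not_subset] at hAu
    obtain ⟨x, hx, hxu⟩ := hAu
    exact ⟨x.rep, x.rep_nonzero, hx.1, hx.2, hxu⟩
  · rw [Set.not_subset] at hBv
    obtain ⟨x, hx, hxu⟩ := hBv
    exact ⟨x.rep, x.rep_nonzero, hxu⟩
  · intro x hx hxf hxh hxu
    obtain ⟨a1, -, a3, a4⟩ := h1 (Projectivization.mk k x hx)
      ⟨⟨(mk_mem_zeros hfd x hx).mpr hxf, (mk_mem_zeros hh x hx).mpr hxh⟩,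
        fun h => hxu ((mk_mem_zeros hu x hx).mp h)⟩
    have b1 := defined_mk F x hx a1
    rw [(app_mk F x hx b1).2] at a3 a4
    have b2 := defined_mk G _ b1 a3
    rw [(app_mk G _ b1 b2).2, Projectivization.mk_eq_mk_iff'] at a4
    obtain ⟨c, hc⟩ := a4
    refine ⟨b1, c, ?_, hc.symm⟩
    rintro rfl
    rw [zero_smul] at hc
    exact b2 hc.symm
  · intro y hy hyv
    obtain ⟨a1, a2, a3, a4⟩ := h2 (Projectivization.mk k y hy)
      ⟨trivial, fun h => hyv ((mk_mem_zeros hv y hy).mp h)⟩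
    have b1 := defined_mk G y hy a1
    rw [(app_mk G y hy b1).2] at a2 a3 a4
    have b2 := defined_mk F _ b1 a3
    rw [(app_mk F _ b1 b2).2, Projectivization.mk_eq_mk_iff'] at a4
    obtain ⟨c, hc⟩ := a4
    refine ⟨b1, (mk_mem_zeros hfd _ b1).mp a2.1, (mk_mem_zeros hh _ b1).mp a2.2, c, ?_, hc.symm⟩
    rintro rfl
    rw [zero_smul] at hc
    exact b2 hc.symm
end linsec

section trdegsec
variable {k κ : Type} [Field k] [Field κ] [Algebra k κ]

theorem trdeg_hyp {n : ℕ} {f : MvPolynomial (Fin (n + 1)) k} (hf : Irreducible f)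
    (b' : Fin (n + 1) → κ)
    (hκ : ∀ P : MvPolynomial (Fin (n + 1)) k, aeval b' P = 0 ↔ f ∣ P)
    (htop : IntermediateField.adjoin k (Set.range b') = ⊤) : Algebra.trdeg k κ = n := by
  apply le_antisymm
  · by_contra hlt
    rw [not_le] at hlt
    have h1 : ((n + 1 : ℕ) : Cardinal) ≤ Algebra.trdeg k κ := by
      rw [Nat.cast_add, Nat.cast_one]
      exact Cardinal.add_one_le_of_lt hlt
    have := alg_of_adjoin_top _ htop
    have hb := Algebra.IsAlgebraic.isTranscendenceBasis_of_le_trdeg_of_finite k b' (by simpa using h1)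
    have h2 := hb.1
    rw [algebraicIndependent_iff] at h2
    exact hf.ne_zero (h2 f ((hκ f).mpr dvd_rfl))
  · have hv : ∃ a, f.degreeOf a ≠ 0 := by
      by_contra! h
      apply hf.not_isUnit
      have h1 : f.vars = ∅ := by
        rw [Finset.eq_empty_iff_forall_notMem]
        intro a ha
        have h2 := h a
        rw [mem_vars] at ha
        obtain ⟨s, hs, hsa⟩ := ha
        have h3 := monomial_le_degreeOf a hs
        exact (Finsupp.mem_support_iff.mp hsa) (by omega)
      rw [vars_eq_empty_iff_eq_C] at h1
      rw [h1]
      apply IsUnit.map C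
      rw [isUnit_iff_ne_zero]
      intro h2
      rw [h2, C_0] at h1
      exact hf.ne_zero h1
    obtain ⟨a, ha⟩ := hv
    have hind : AlgebraicIndependent k (fun i : Fin n => b' (a.succAbove i)) := by
      rw [algebraicIndependent_iff]
      intro P hP
      have h1 : aeval b' (rename a.succAbove P) = 0 := by
        rw [aeval_rename]; exact hP
      rw [hκ] at h1
      obtain ⟨g, hg⟩ := h1
      by_contra hP0
      have hr0 : rename a.succAbove P ≠ 0 := by
        intro h
        exact hP0 (rename_injective _ Fin.succAbove_right_injective (h.trans (map_zero _).symm))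
      have hg0 : g ≠ 0 := by rintro rfl; rw [mul_zero] at hg; exact hr0 hg
      have h2 := degreeOf_mul_eq (n := a) hf.ne_zero hg0
      rw [← hg] at h2
      have h3 : degreeOf a (rename a.succAbove P) = 0 := by
        rw [degreeOf_def, Multiset.count_eq_zero]
        intro h
        have h4 := degrees_rename _ _ h
        rw [Multiset.mem_map] at h4
        obtain ⟨i, -, hi⟩ := h4
        exact Fin.succAbove_ne a i hi
      omega
    simpa using hind.cardinalMk_le_trdeg
end trdegsec

open MvPolynomial ProjSp

section geomsec
variable {k κ : Type} [Field k] [IsAlgClosed k] [Field κ] [Algebra k κ]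

theorem Vlem {n : ℕ} {f : MvPolynomial (Fin (n + 1)) k} (hf : Irreducible f)
    (p : Fin (n + 1) → k) (hc : ∀ x (s : k), eval x f = 0 → eval (x + s • p) f = 0)
    (la : (Fin (n + 1) → k) →ₗ[k] k) (hla : la p = 1)
    (π : Fin (n + 1) → MvPolynomial (Fin (n + 1)) k)
    (hπ : ∀ x a, eval x (π a) = x a - la x * p a)
    (b' : Fin (n + 1) → κ)
    (hκ : ∀ P : MvPolynomial (Fin (n + 1)) k, aeval b' P = 0 ↔ f ∣ P)
    (g : MvPolynomial (Fin (n + 1)) k) :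
    aeval (fun a => aeval b' (π a)) g = 0 ↔ ∀ x, eval x f = 0 → la x = 0 → eval x g = 0 := by
  rw [← aeval_comp, hκ]
  constructor
  · rintro ⟨q, hq⟩ x hx hlx
    have h1 := congrArg (eval x) hq
    rw [eval_comp, map_mul, hx, zero_mul] at h1
    have h2 : (fun i => eval x (π i)) = x := by
      funext i
      rw [hπ, hlx, zero_mul, sub_zero]
    rwa [h2] at h1
  · intro h
    apply dvd_of_vanish hf
    intro x hx
    rw [eval_comp]
    have h2 : (fun i => eval x (π i)) = x + (- la x) • p := by
      funext i
      rw [hπ]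
      simp [sub_eq_add_neg]
    rw [h2]
    apply h _ (hc _ _ hx)
    simp [hla]

theorem trlow {n m d e : ℕ} {f : MvPolynomial (Fin (n + 1)) k}
    (hfd : f.IsHomogeneous d)
    (p : Fin (n + 1) → k) (hc : ∀ x (s : k), eval x f = 0 → eval (x + s • p) f = 0)
    (la : (Fin (n + 1) → k) →ₗ[k] k) (hla : la p = 1)
    (π : Fin (n + 1) → MvPolynomial (Fin (n + 1)) k)
    (hπ : ∀ x a, eval x (π a) = x a - la x * p a)
    (b' : Fin (n + 1) → κ)
    (hκ : ∀ P : MvPolynomial (Fin (n + 1)) k, aeval b' P = 0 ↔ f ∣ P)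
    (F : Fin (m + 1) → MvPolynomial (Fin (n + 1)) k) (hF : ∀ j, (F j).IsHomogeneous e)
    (G : Fin (n + 1) → MvPolynomial (Fin (m + 1)) k)
    (v : MvPolynomial (Fin (m + 1)) k) (hv : ∃ y, y ≠ 0 ∧ eval y v ≠ 0)
    (hG : ∀ y, y ≠ 0 → eval y v ≠ 0 →
        (fun a => eval y (G a)) ≠ 0 ∧ eval (fun a => eval y (G a)) f = 0 ∧
        la (fun a => eval y (G a)) = 0 ∧ ∃ c : k, c ≠ 0 ∧
          (fun j => eval (fun a => eval y (G a)) (F j)) = c • y) :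
    ((m + 2 : ℕ) : Cardinal) ≤ Algebra.trdeg k κ := by
  obtain ⟨y, hy, hyv⟩ := hv
  obtain ⟨a, ha⟩ := Function.ne_iff.mp (hG y hy hyv).1
  have hGa : G a ≠ 0 := by
    intro h
    simp [h] at ha
  have hv0 : v ≠ 0 := by
    intro h
    simp [h] at hyv
  let Q : Option (Fin (m + 1)) → MvPolynomial (Fin (n + 1)) k :=
    fun o => o.elim (linP la) (fun j => aeval π (X a * F j))
  have hind : AlgebraicIndependent k (fun o => aeval b' (Q o)) := by
    rw [algebraicIndependent_iff]
    intro P hP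
    rw [← aeval_comp, hκ] at hP
    obtain ⟨q, hq⟩ := hP
    have hprod : P * rename some (v * G a * X 0) = 0 := by
      apply MvPolynomial.funext
      intro w
      rw [map_mul, map_zero, eval_rename]
      by_contra hne
      obtain ⟨hP0, h2⟩ := mul_ne_zero_iff.mp hne
      rw [map_mul, map_mul, eval_X] at h2
      obtain ⟨h3, hz0⟩ := mul_ne_zero_iff.mp h2
      obtain ⟨hvz, hGz⟩ := mul_ne_zero_iff.mp h3
      have hz : (w ∘ some) ≠ 0 := by
        intro h
        rw [h] at hz0
        exact hz0 rfl
      obtain ⟨-, g2, g3, c, hc0, g4⟩ := hG _ hz hvz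
      obtain ⟨s, hs⟩ := IsAlgClosed.exists_pow_nat_eq ((eval (w ∘ some) (G a) * c)⁻¹)
        (Nat.succ_pos e)
      let gz : Fin (n + 1) → k := fun a => eval (w ∘ some) (G a)
      let x := s • gz + w none • p
      have hxf : eval x f = 0 := by
        apply hc
        rw [hom_eval_smul hfd]
        exact mul_eq_zero_of_right _ g2
      have hlx : la x = w none := by
        have : la gz = 0 := g3
        simp [x, hla, this]
      have hπx : (fun a => eval x (π a)) = s • gz := by
        funext a
        rw [hπ, hlx]
        simp [x]
      have h1 := congrArg (eval x) hq
      rw [map_mul, hxf, zero_mul, eval_comp] at h1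
      apply hP0
      have hw : (fun i => eval x (Q i)) = w := by
        funext o
        cases o with
        | none =>
          change eval x (linP la) = _
          rw [eval_linP, hlx]
        | some j =>
          change eval x (aeval π (X a * F j)) = _
          rw [eval_comp, hπx, map_mul, eval_X, hom_eval_smul (hF j)]
          have h5 : eval gz (F j) = c * w (some j) := congrFun g4 j
          rw [h5]
          change s * gz a * _ = _
          have h6 : s ^ (e + 1) * (gz a * c) = 1 := by
            rw [show e + 1 = e.succ from rfl, hs]
            exact inv_mul_cancel₀ (mul_ne_zero hGz hc0)
          linear_combination (w (some j)) * h6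
      rwa [hw] at h1
    rcases mul_eq_zero.mp hprod with h | h
    · exact h
    · exfalso
      have h7 : v * G a * X 0 = 0 :=
        rename_injective _ (Option.some_injective _) (h.trans (map_zero _).symm)
      exact mul_ne_zero (mul_ne_zero hv0 hGa) (X_ne_zero 0) h7
  simpa [add_assoc, one_add_one_eq_two] using hind.cardinalMk_le_trdeg

theorem aeval_mem_IF {K : IntermediateField k κ} {σ : Type} (w : σ → κ) (hw : ∀ i, w i ∈ K)
    (P : MvPolynomial σ k) : aeval w P ∈ K := by
  induction P using MvPolynomial.induction_on with
  | C a => rw [aeval_C]; exact K.algebraMap_mem a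
  | add p q hp hq => rw [map_add]; exact K.add_mem hp hq
  | mul_X p i hp => rw [map_mul, aeval_X]; exact K.mul_mem hp (hw i)

theorem geom {n m e e' : ℕ} {f : MvPolynomial (Fin (n + 1)) k} (hf : Irreducible f)
    (p : Fin (n + 1) → k) (hc : ∀ x (s : k), eval x f = 0 → eval (x + s • p) f = 0)
    (la : (Fin (n + 1) → k) →ₗ[k] k) (hla : la p = 1)
    (μ : Fin n → (Fin (n + 1) → k) →ₗ[k] k) (hμp : ∀ i, μ i p = 0)
    (N : Fin n → Fin (n + 1) → k) 
    (hsp : ∀ x, x = ∑ i, μ i x • N i + la x • p)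
    (b' : Fin (n + 1) → κ)
    (hκ : ∀ P : MvPolynomial (Fin (n + 1)) k, aeval b' P = 0 ↔ f ∣ P)
    (htop : IntermediateField.adjoin k (Set.range b') = ⊤)
    (F : Fin (m + 1) → MvPolynomial (Fin (n + 1)) k) (hF : ∀ j, (F j).IsHomogeneous e)
    (G : Fin (n + 1) → MvPolynomial (Fin (m + 1)) k) (hGh : ∀ j, (G j).IsHomogeneous e')
    (u : MvPolynomial (Fin (n + 1)) k)
    (hu : ∃ x, x ≠ 0 ∧ eval x f = 0 ∧ la x = 0 ∧ eval x u ≠ 0)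
    (hFF : ∀ x, x ≠ 0 → eval x f = 0 → la x = 0 → eval x u ≠ 0 →
        (fun j => eval x (F j)) ≠ 0 ∧ ∃ c : k, c ≠ 0 ∧
          (fun a => eval (fun j => eval x (F j)) (G a)) = c • x)
    (hlow : ((m + 2 : ℕ) : Cardinal) ≤ Algebra.trdeg k κ)
    (i : Fin n) (hi : aeval b' (linP (μ i)) ≠ 0) :
    n = m + 2 ∧ ∃ φ : Fin m → κ, AlgebraicIndependent k φ ∧
      IntermediateField.adjoin k (Set.range φ) = IntermediateField.adjoin k
        (Set.range (fun j => aeval b' (linP (μ j)) / aeval b' (linP (μ i)))) ∧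
      ¬ IsAlgebraic (Algebra.adjoin k (Set.range φ))
        (aeval b' (linP la) / aeval b' (linP (μ i))) := by
  let π : Fin (n + 1) → MvPolynomial (Fin (n + 1)) k := fun a => ∑ j, C (N j a) * linP (μ j)
  have hπ : ∀ x a, eval x (π a) = x a - la x * p a := by
    intro x a
    have := congrFun (hsp x) a
    rw [eq_sub_iff_add_eq]
    conv_rhs => rw [this]
    simp [π, eval_linP, mul_comm]
  have hX : ∀ a, (X a : MvPolynomial (Fin (n + 1)) k) = π a + C (p a) * linP la := by
    intro a
    apply MvPolynomial.funext
    intro x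
    rw [map_add, map_mul, eval_linP, hπ, eval_X, eval_C]
    ring
  let c : Fin (n + 1) → κ := fun a => aeval b' (π a)
  let lb : Fin n → κ := fun j => aeval b' (linP (μ j))
  let llb : κ := aeval b' (linP la)
  have V : ∀ g, aeval c g = 0 ↔ ∀ x, eval x f = 0 → la x = 0 → eval x g = 0 :=
    Vlem hf p hc la hla π hπ b' hκ
  have hcl : ∀ j, aeval c (linP (μ j)) = lb j := by
    intro j
    change aeval (fun a => aeval b' (π a)) _ = _
    rw [← aeval_comp]
    congr 1
    apply MvPolynomial.funext
    intro x
    rw [eval_comp, eval_linP, eval_linP]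
    have : (fun a => eval x (π a)) = x - la x • p := by
      funext a
      rw [hπ]; rfl
    rw [this]
    simp [hμp]
  have hcN : ∀ a, c a = ∑ j, algebraMap k κ (N j a) * lb j := by
    intro a
    simp only [c, π, lb, map_sum, map_mul, aeval_C]
  have hb : ∀ a, b' a = c a + algebraMap k κ (p a) * llb := by
    intro a
    have := congrArg (aeval b') (hX a)
    rw [aeval_X, map_add, map_mul, aeval_C] at this
    exact this
  obtain ⟨x0, hx0, hx0f, hx0l, hx0u⟩ := hu
  have ne : ∀ g, eval x0 g ≠ 0 → aeval c g ≠ 0 := fun g hg h => hg ((V g).mp h x0 hx0f hx0l)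
  obtain ⟨hF0, c0, hc0, hGF0⟩ := hFF x0 hx0 hx0f hx0l hx0u
  obtain ⟨j0, hj0⟩ := Function.ne_iff.mp hF0
  obtain ⟨a0, ha0⟩ := Function.ne_iff.mp hx0
  have huc : aeval c u ≠ 0 := ne _ hx0u
  let Fc : Fin (m + 1) → κ := fun j => aeval c (F j)
  have hFj0 : Fc j0 ≠ 0 := ne _ hj0
  have hca0 : c a0 ≠ 0 := by
    have := ne (X a0) (by rw [eval_X]; exact ha0)
    rwa [aeval_X] at this
  have hGa0 : aeval Fc (G a0) ≠ 0 := by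
    have := ne (aeval F (G a0)) (by
      rw [eval_comp, congrFun hGF0 a0]
      exact mul_ne_zero hc0 ha0)
    rwa [aeval_comp] at this
  have hid : ∀ a b, aeval Fc (G a) * c b = aeval Fc (G b) * c a := by
    intro a b
    have : aeval c (u * (aeval F (G a) * X b - aeval F (G b) * X a)) = 0 := by
      rw [V]
      intro x hxf hxl
      by_cases hx : x = 0
      · simp only [map_mul, map_sub, eval_X, hx, Pi.zero_apply, mul_zero, sub_self]
      by_cases hxu : eval x u = 0
      · rw [map_mul, hxu, zero_mul]
      obtain ⟨-, c1, -, h1⟩ := hFF x hx hxf hxl hxu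
      have e1 := congrFun h1 a
      have e2 := congrFun h1 b
      simp only [Pi.smul_apply, smul_eq_mul] at e1 e2
      rw [map_mul, map_sub, map_mul, map_mul, eval_comp, eval_comp, e1, e2, eval_X, eval_X]
      ring
    rw [map_mul, mul_eq_zero] at this
    have := this.resolve_left huc
    rw [map_sub, map_mul, map_mul, aeval_X, aeval_X, aeval_comp, aeval_comp, sub_eq_zero] at this
    exact this
  let φt : Fin (m + 1) → κ := fun j => Fc j / Fc j0
  let φ : Fin m → κ := fun j => φt (j0.succAbove j)
  have hFφ : Fc = fun j => Fc j0 * φt j := by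
    funext j
    simp only [φt]
    field_simp
  let la' : κ := aeval Fc (G a0) / c a0 / Fc j0 ^ e'
  have hla' : la' ≠ 0 := div_ne_zero (div_ne_zero hGa0 hca0) (pow_ne_zero _ hFj0)
  have hGφ : ∀ a, aeval φt (G a) = la' * c a := by
    intro a
    have h1 := hom_aeval_mul (hGh a) (Fc j0) φt
    rw [← hFφ] at h1
    have h2 := hid a a0
    have h3 : Fc j0 ^ e' ≠ 0 := pow_ne_zero _ hFj0
    simp only [la']
    field_simp
    rw [← h2, h1]
    ring
  let E := IntermediateField.adjoin k (Set.range φ)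
  let E' := IntermediateField.adjoin k (Set.range (fun j => lb j / lb i))
  have hφtE : ∀ j, φt j ∈ E := by
    intro j
    by_cases hj : j = j0
    · rw [hj]
      simp only [φt]
      rw [div_self hFj0]
      exact E.one_mem
    · obtain ⟨j', rfl⟩ := Fin.exists_succAbove_eq hj
      exact IntermediateField.subset_adjoin _ _ ⟨j', rfl⟩
  have hlbE : ∀ j, la' * lb j ∈ E := by
    intro j
    have h1 := hom_aeval_mul (linP_hom (μ j)) la' c
    rw [pow_one, hcl] at h1
    rw [← h1]
    apply aeval_mem_IF
    intro a
    rw [← hGφ]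
    exact aeval_mem_IF _ hφtE _
  have hE'E : E' ≤ E := by
    rw [IntermediateField.adjoin_le_iff]
    rintro _ ⟨j, rfl⟩
    have : lb j / lb i = (la' * lb j) / (la' * lb i) := by
      rw [mul_div_mul_left _ _ hla']
    simp only [this]
    exact E.div_mem (hlbE _) (hlbE _)
  have hEE' : E ≤ E' := by
    rw [IntermediateField.adjoin_le_iff]
    rintro _ ⟨j, rfl⟩
    have hcE : ∀ a, c a / lb i ∈ E' := by
      intro a
      rw [hcN, Finset.sum_div]
      apply E'.sum_mem
      intro j _
      rw [mul_div_assoc]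
      exact E'.mul_mem (E'.algebraMap_mem _) (IntermediateField.subset_adjoin _ _ ⟨j, rfl⟩)
    have hcF : ∀ j, Fc j = lb i ^ e * aeval (fun a => c a / lb i) (F j) := by
      intro j
      rw [← hom_aeval_mul (hF j)]
      have : (fun a => lb i * (c a / lb i)) = c := by
        funext a
        rw [mul_div_cancel₀ _ hi]
      rw [this]
    have h5 : lb i ^ e ≠ 0 := pow_ne_zero _ hi
    simp only [φ, φt]
    rw [hcF, hcF j0, mul_div_mul_left _ _ h5]
    exact E'.div_mem (aeval_mem_IF _ hcE _) (aeval_mem_IF _ hcE _)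
  let t : κ := llb / lb i
  let g : Option (Option (Fin m)) → κ := fun o => o.elim (lb i) (fun o' => o'.elim t φ)
  have hgtop : IntermediateField.adjoin k (Set.range g) = ⊤ := by
    rw [eq_top_iff, ← htop, IntermediateField.adjoin_le_iff]
    set M := IntermediateField.adjoin k (Set.range g) with hM
    have hgM : ∀ o, g o ∈ M := fun o => IntermediateField.subset_adjoin _ _ ⟨o, rfl⟩
    have hEM : E ≤ M := by
      rw [IntermediateField.adjoin_le_iff]
      rintro _ ⟨j, rfl⟩
      exact hgM (some (some j))
    have hi' : lb i ≠ 0 := hi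
    have hlM : ∀ j, lb j ∈ M := by
      intro j
      have h1 : lb j / lb i ∈ M := hEM (hE'E (IntermediateField.subset_adjoin _ _ ⟨j, rfl⟩))
      have h2 := M.mul_mem h1 (hgM none)
      have h3 : lb j / lb i * g none = lb j := div_mul_cancel₀ _ hi'
      rwa [h3] at h2
    have hllM : llb ∈ M := by
      have h2 := M.mul_mem (hgM (some none)) (hgM none)
      have h3 : g (some none) * g none = llb := div_mul_cancel₀ _ hi'
      rwa [h3] at h2
    rintro _ ⟨a, rfl⟩
    change b' a ∈ M
    rw [hb, hcN]
    exact M.add_mem (M.sum_mem fun j _ => M.mul_mem (M.algebraMap_mem _) (hlM j))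
      (M.mul_mem (M.algebraMap_mem _) hllM)
  have := alg_of_adjoin_top _ hgtop
  have hbas := Algebra.IsAlgebraic.isTranscendenceBasis_of_le_trdeg_of_finite k g (by
    simpa [add_assoc, one_add_one_eq_two] using hlow)
  refine ⟨?_, φ, ?_, le_antisymm hEE' hE'E, ?_⟩
  · have h1 := hbas.cardinalMk_eq_trdeg
    rw [trdeg_hyp hf b' hκ htop] at h1
    have h2 : ((m + 2 : ℕ) : Cardinal) = (n : ℕ) := by
      rw [← h1]
      simp [add_assoc, one_add_one_eq_two]
    exact (Nat.cast_injective h2).symm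
  · exact hbas.1.comp (fun j => some (some j)) (fun _ _ h => by simpa using h)
  · have h1 : AlgebraicIndependent k (fun o : Option (Fin m) => o.elim t φ) :=
      hbas.1.comp some (Option.some_injective _)
    have h2 : AlgebraicIndependent k φ := h1.comp some (Option.some_injective _)
    exact (AlgebraicIndependent.option_iff_transcendental h2 t).mp h1
end geomsec

open MvPolynomial ProjSp

section finalsec
variable {k : Type} [Field k]

theorem bir_refl {n : ℕ} {A : Set (ProjSp k n)} (hA : A.Nonempty) :
    IsBirationalOn k (⟨1, X, isHomogeneous_X k⟩ : RatMap k n n) ⟨1, X, isHomogeneous_X k⟩ A A := by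
  have hdef : ∀ x : ProjSp k n, (⟨1, X, isHomogeneous_X k⟩ : RatMap k n n).Defined x := by
    intro x
    simp only [RatMap.Defined, eval_X]
    exact x.rep_nonzero
  have happ : ∀ x : ProjSp k n, (⟨1, X, isHomogeneous_X k⟩ : RatMap k n n).app x = x := by
    intro x
    have h : (fun i => eval x.rep (X i : MvPolynomial (Fin (n + 1)) k)) ≠ 0 := hdef x
    simp only [RatMap.app]
    rw [dif_pos h]
    simp only [eval_X]
    exact x.mk_rep
  have hz : ¬ A ⊆ zeros k (1 : MvPolynomial (Fin (n + 1)) k) := by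
    intro h
    obtain ⟨x, hx⟩ := hA
    have h1 : eval x.rep (1 : MvPolynomial (Fin (n + 1)) k) = 0 := h hx
    rw [map_one] at h1
    exact one_ne_zero h1
  refine ⟨1, 1, 0, 0, isHomogeneous_one _ _, isHomogeneous_one _ _, hz, hz, ?_, ?_⟩
  all_goals
    intro x hx
    rw [happ, happ]
    exact ⟨hdef x, hx.1, hdef x, rfl⟩

theorem cremona_refl {n : ℕ} {A : Set (ProjSp k n)} (hA : A.Nonempty) :
    CremonaEquivalent k A A :=
  ⟨_, _, bir_refl (hA.mono (Set.subset_univ A)), bir_refl hA⟩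

theorem cone_poly [IsAlgClosed k] {n d : ℕ} {f : MvPolynomial (Fin (n + 1)) k} (hf : Irreducible f)
    (hfd : f.IsHomogeneous d)
    (p : Fin (n + 1) → k) (hc : ∀ x (s : k), eval x f = 0 → eval (x + s • p) f = 0)
    (la : (Fin (n + 1) → k) →ₗ[k] k)
    (l : Fin n → MvPolynomial (Fin (n + 1)) k) (N : Fin n → Fin (n + 1) → k)
    (hπ : ∀ x a, eval x (∑ i, C (N i a) * l i) = x a - la x * p a) :
    ∃ fh : MvPolynomial (Fin n) k, fh.IsHomogeneous d ∧ f = aeval l fh := by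
  let q : Fin (n + 1) → MvPolynomial (Fin n) k := fun a => ∑ i, C (N i a) * X i
  let f1 := aeval q f
  have hq : ∀ a, (q a).IsHomogeneous 1 := fun a =>
    IsHomogeneous.sum _ _ _ (fun _ _ => isHomogeneous_C_mul_X _ _)
  have hf1 : f1.IsHomogeneous d := by
    have := hfd.aeval q hq
    rw [one_mul] at this
    exact this
  have hev : ∀ x, eval x (aeval l f1) = eval (x + (- la x) • p) f := by
    intro x
    simp only [f1]
    rw [eval_comp, eval_comp]
    congr 2
    funext a
    rw [Pi.add_apply, Pi.smul_apply, smul_eq_mul, neg_mul, ← sub_eq_add_neg, ← hπ]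
    simp [q]
  have hdvd : f ∣ aeval l f1 := by
    apply dvd_of_vanish hf
    intro x hx
    rw [hev]
    exact hc _ _ hx
  obtain ⟨g, hg⟩ := hdvd
  have h0 : aeval l f1 ≠ 0 := by
    intro h
    apply hf.ne_zero
    apply MvPolynomial.funext
    intro x
    have h1 := hev x
    rw [h, map_zero] at h1
    have h2 := hc _ (la x) h1.symm
    rw [map_zero, ← h2]
    congr 2
    simp
  -- both sides have degree `d`
  have hfl : (f * g).IsHomogeneous d := by
    rw [← hg]
    let r : Fin (n + 1) → MvPolynomial (Fin (n + 1)) k := fun a => X a - linP la * C (p a)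
    have hr : aeval l f1 = aeval r f := by
      apply MvPolynomial.funext
      intro x
      rw [hev, eval_comp]
      congr 2
      funext a
      simp [r, eval_linP, sub_eq_add_neg]
    rw [hr]
    have := hfd.aeval r (n := 1) (fun a => by
      apply (isHomogeneous_X _ _).sub
      have := (linP_hom la).mul (isHomogeneous_C (Fin (n + 1)) (p a))
      simpa using this)
    simpa using this
  have hg0 := (hom_of_mul hfd hf.ne_zero hfl (hg ▸ h0)).2
  rw [Nat.sub_self] at hg0
  have hgC := hom_zero_eq_C hg0
  have hc0 : coeff 0 g ≠ 0 := by
    intro h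
    rw [h, C_0] at hgC
    rw [hgC, mul_zero] at hg
    exact h0 hg
  refine ⟨C (coeff 0 g)⁻¹ * f1, ?_, ?_⟩
  · have := (isHomogeneous_C (Fin n) (coeff 0 g)⁻¹).mul hf1
    simpa using this
  · rw [map_mul, aeval_C, hg, hgC, algebraMap_eq, coeff_C, if_pos rfl, mul_left_comm, ← C_mul, inv_mul_cancel₀ hc0, C_1, mul_one]
end finalsec

/-- Theorem `th:cone`, second part.
Every irreducible reduced divisorial cone in `ℙⁿ` over a rational variety — i.e. a
cone whose (general) hyperplane section `C = S ∩ H`, for a hyperplane `H` missing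
the vertex, is a rational variety — is Cremona equivalent to a hyperplane. -/
theorem cone_over_rational_cremonaEquivalent_to_hyperplane
    (k : Type) [Field k] [IsAlgClosed k] [CharZero k] (n : ℕ)
    (S : Set (ProjSp k n)) (p : ProjSp k n) (H : Set (ProjSp k n))
    (hS : IsIrredDivisor k S) (hcone : IsConeWithVertex k S p)
    (hH : IsHyperplane k H) (hp : p ∉ H)
    (hrat : IsRationalVariety k (S ∩ H)) :
    ∃ H' : Set (ProjSp k n), IsHyperplane k H' ∧ CremonaEquivalent k S H' := by
  classical
  obtain ⟨d, f, hd, hfd, hf, rfl⟩ := hS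
  obtain ⟨h, hh0, hh, rfl⟩ := hH
  have hSne : (zeros k f).Nonempty := ⟨p, hcone.1⟩
  by_cases hd1 : d = 1
  · subst hd1
    exact ⟨zeros k f, ⟨f, hf.ne_zero, hfd, rfl⟩, cremona_refl hSne⟩
  obtain ⟨m, F, G, hbir⟩ := hrat
  obtain ⟨u, v, hu, hv, hFF, hGG⟩ := rat_affine hfd hh F G hbir
  obtain ⟨la, μ, N, hla, hlap, -, hμp, hμN, hsp⟩ := lin_split h hh p.rep hp
  simp only [hla] at hu hFF hGG
  have hc := cone_add hd hfd hcone
  obtain ⟨L, κ, _, _, _, _, b, b', hL, hκ, htop⟩ := exists_fields hf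
  cases n with
  | zero =>
    exfalso
    obtain ⟨x, hx, -, hx2, -⟩ := hu
    apply hx
    rw [hsp x, hx2]
    simp
  | succ n' =>
  have hfl : ¬ f ∣ linP (μ 0) := by
    intro ⟨g, hg⟩
    have h0 : linP (μ 0) ≠ 0 := by
      intro h1
      have h2 := eval_linP (μ 0) (N 0)
      rw [h1, hμN, map_zero] at h2
      exact zero_ne_one h2
    have h3 := hom_of_mul hfd hf.ne_zero (hg ▸ linP_hom (μ 0)) (hg ▸ h0)
    omega
  have hX : ∀ a, (X a : MvPolynomial (Fin (n' + 1 + 1)) k) =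
      ∑ i, C (N i a) * linP (μ i) + C (p.rep a) * linP la := by
    intro a
    apply MvPolynomial.funext
    intro x
    have h1 := congrFun (hsp x) a
    rw [eval_X]
    conv_lhs => rw [h1]
    simp [eval_linP, mul_comm]
  have hπ : ∀ x a, eval x (∑ i, C (N i a) * linP (μ i)) = x a - la x * p.rep a := by
    intro x a
    have h1 := congrArg (eval x) (hX a)
    rw [eval_X, map_add, map_mul, eval_C, eval_linP] at h1
    rw [h1]
    ring
  obtain ⟨fh, hfh, hffh⟩ := cone_poly hf hfd p.rep hc la (fun i => linP (μ i)) N hπ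
  have hlow := trlow hfd p.rep hc la hlap _ hπ b' hκ F.comp F.homog G.comp v hv hGG
  obtain ⟨hn, φ, h1, h2, h3⟩ := geom hf p.rep hc la hlap μ hμp N hsp b' hκ htop F.comp F.homog
    G.comp G.homog u hu hFF hlow 0 (fun h => hfl ((hκ _).mp h))
  obtain rfl : n' = m + 1 := by omega
  obtain ⟨j, hj⟩ := alg_main hf hfd hSne b b' hL hκ (fun i => linP (μ i)) (fun i => linP_hom _) hfl
    (linP la) (linP_hom la) N p.rep hX fh hfh hffh φ h1 h2 h3
  exact ⟨zeros k (X j), ⟨X j, X_ne_zero j, isHomogeneous_X _ _, rfl⟩, hj⟩
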